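/- arXiv:1701.04699 — 3 statements merged into one kernel-verified Lean document; each statement's English description precedes it below -/
import Mathlib

section
/- Rational points are equidistributed on the unit circle in the sense that for every arc A = {(cos t, sin t) : θ₁ ≤ t ≤ θ₂} with 0 < θ₂ − θ₁ ≤ 2π, lim_{H→∞} |{(p,q) ∈ A ∩ ℚ² : h(p,q) ≤ H}| / |{(p,q) ∈ S¹ ∩ ℚ² : h(p,q) ≤ H}| = (θ₂−θ₁)/(2π) = length(A)/(2π). -/
open Filter

/-- The height of a rational point `(p,q)`: the minimal positive integer `h` such that
`(hp, hq) ∈ ℤ²`. -/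
noncomputable def height (p q : ℚ) : ℕ :=
  sInf {h : ℕ | 0 < h ∧ (∃ a : ℤ, (h : ℚ) * p = a) ∧ (∃ b : ℤ, (h : ℚ) * q = b)}


def InSec (a b x y : ℝ) : Prop :=
  0 ≤ Real.cos a * y - Real.sin a * x ∧ Real.cos b * y - Real.sin b * x ≤ 0

lemma inSec_smul {a b x y r : ℝ} (hr : 0 < r) : InSec a b (r * x) (r * y) ↔ InSec a b x y := by
  unfold InSec
  have h1 : Real.cos a * (r * y) - Real.sin a * (r * x)
    = r * (Real.cos a * y - Real.sin a * x) := by ring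
  have h2 : Real.cos b * (r * y) - Real.sin b * (r * x)
    = r * (Real.cos b * y - Real.sin b * x) := by ring
  rw [h1, h2, mul_nonneg_iff_of_pos_left hr]
  refine and_congr Iff.rfl ⟨fun h => ?_, fun h => ?_⟩
  · by_contra hc
    push Not at hc
    have := mul_pos hr hc
    linarith
  · exact mul_nonpos_of_nonneg_of_nonpos hr.le h

lemma inSec_trig {a b φ : ℝ} :
    InSec a b (Real.cos φ) (Real.sin φ) ↔ 0 ≤ Real.sin (φ - a) ∧ Real.sin (φ - b) ≤ 0 := by
  unfold InSec
  rw [Real.sin_sub, Real.sin_sub]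
  have h1 : Real.cos a * Real.sin φ - Real.sin a * Real.cos φ
    = Real.sin φ * Real.cos a - Real.cos φ * Real.sin a := by ring
  have h2 : Real.cos b * Real.sin φ - Real.sin b * Real.cos φ
    = Real.sin φ * Real.cos b - Real.cos φ * Real.sin b := by ring
  rw [h1, h2]

lemma inSec_trig_Ico {a b φ : ℝ} (hab : a < b) (hb : b - a < Real.pi)
    (h1 : a ≤ φ) (h2 : φ < a + 2 * Real.pi) :
    InSec a b (Real.cos φ) (Real.sin φ) ↔ φ ≤ b := by
  rw [inSec_trig]
  have hpi := Real.pi_pos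
  constructor
  · rintro ⟨h3, h4⟩
    by_contra hc
    push Not at hc
    rcases le_or_gt φ (a + Real.pi) with h | h
    · have := Real.sin_pos_of_pos_of_lt_pi (x := φ - b) (by linarith) (by linarith)
      linarith
    · have := Real.sin_neg_of_neg_of_neg_pi_lt (x := φ - a - 2 * Real.pi)
        (by linarith) (by linarith)
      rw [Real.sin_sub_two_pi] at this
      linarith
  · intro h
    refine ⟨Real.sin_nonneg_of_nonneg_of_le_pi (by linarith) (by linarith), ?_⟩
    exact Real.sin_nonpos_of_nonpos_of_neg_pi_le (by linarith) (by linarith)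

open MeasureTheory in
lemma angle_integral {a b : ℝ} (hab : a < b) (hb : b - a < Real.pi) :
    ∫ φ in Set.Ioo (-Real.pi) Real.pi,
      ({φ : ℝ | InSec a b (Real.cos φ) (Real.sin φ)}.indicator (fun _ => (1:ℝ))) φ = b - a := by
  classical
  set f : ℝ → ℝ :=
    {φ : ℝ | InSec a b (Real.cos φ) (Real.sin φ)}.indicator (fun _ => (1:ℝ)) with hf
  have hper : Function.Periodic f (2 * Real.pi) := by
    intro x
    simp [hf, Set.indicator_apply]
  have hpi := Real.pi_pos
  have h1 := hper.intervalIntegral_add_eq (-Real.pi) a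
  rw [show -Real.pi + 2 * Real.pi = Real.pi by ring,
    intervalIntegral.integral_of_le (by linarith), intervalIntegral.integral_of_le (by linarith),
    integral_Ioc_eq_integral_Ioo, integral_Ioc_eq_integral_Ioo] at h1
  rw [h1]
  have h2 : ∀ φ ∈ Set.Ioo a (a + 2 * Real.pi), f φ = (Set.Iic b).indicator (fun _ => (1:ℝ)) φ := by
    intro φ hφ
    have := inSec_trig_Ico hab hb hφ.1.le hφ.2
    simp only [hf, Set.indicator_apply, Set.mem_ofPred_eq, this, Set.mem_Iic]
  rw [setIntegral_congr_fun measurableSet_Ioo h2, setIntegral_indicator measurableSet_Iic]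
  have h3 : Set.Ioo a (a + 2 * Real.pi) ∩ Set.Iic b = Set.Ioc a b := by
    ext x
    simp only [Set.mem_inter_iff, Set.mem_Ioo, Set.mem_Iic, Set.mem_Ioc]
    constructor
    · rintro ⟨⟨h, _⟩, h'⟩
      exact ⟨h, h'⟩
    · rintro ⟨h, h'⟩
      exact ⟨⟨h, by linarith⟩, h'⟩
  rw [h3]
  simp [measureReal_def, hab.le]

open MeasureTheory in
lemma radial_integral :
    ∫ r in Set.Ioi (0:ℝ), r * (Set.Iic (1:ℝ)).indicator (fun _ => (1:ℝ)) r = 1 / 2 := by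
  have : ∀ r : ℝ, r * (Set.Iic (1:ℝ)).indicator (fun _ => (1:ℝ)) r
      = (Set.Iic (1:ℝ)).indicator (fun r => r) r := by
    intro r
    simp [Set.indicator_apply]
  simp_rw [this]
  rw [setIntegral_indicator measurableSet_Iic, Set.Ioi_inter_Iic,
    ← intervalIntegral.integral_of_le zero_le_one]
  simp

lemma measurableSet_sec (a b : ℝ) :
    MeasurableSet {p : ℝ × ℝ | InSec a b p.1 p.2 ∧ p.1 ^ 2 + p.2 ^ 2 ≤ 1} := by
  apply IsClosed.measurableSet
  unfold InSec
  refine IsClosed.and (IsClosed.and ?_ ?_) ?_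
  · exact isClosed_le (by fun_prop) (by fun_prop)
  · exact isClosed_le (by fun_prop) (by fun_prop)
  · exact isClosed_le (by fun_prop) (by fun_prop)

open MeasureTheory in
lemma sector_volume {a b : ℝ} (hab : a < b) (hb : b - a < Real.pi) :
    volume.real {p : ℝ × ℝ | InSec a b p.1 p.2 ∧ p.1 ^ 2 + p.2 ^ 2 ≤ 1} = (b - a) / 2 := by
  classical
  rw [← integral_indicator_one (measurableSet_sec a b), ← integral_comp_polarCoord_symm]
  have h1 : ∀ p ∈ polarCoord.target, p.1 • ({p : ℝ × ℝ | InSec a b p.1 p.2 ∧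
      p.1 ^ 2 + p.2 ^ 2 ≤ 1}.indicator (1 : ℝ × ℝ → ℝ)) (polarCoord.symm p)
      = (p.1 * (Set.Iic (1:ℝ)).indicator (fun _ => (1:ℝ)) p.1) *
       ({φ : ℝ | InSec a b (Real.cos φ) (Real.sin φ)}.indicator (fun _ => (1:ℝ))) p.2 := by
    rintro ⟨r, φ⟩ h
    have hr : 0 < r := h.1
    have e : (r * Real.cos φ) ^ 2 + (r * Real.sin φ) ^ 2 = r ^ 2 := by
      have := Real.sin_sq_add_cos_sq φ
      linear_combination r ^ 2 * this
    have e2 : r ^ 2 ≤ 1 ↔ r ≤ 1 := by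
      rw [sq_le_one_iff₀ hr.le]
    simp only [polarCoord_symm_apply, Set.indicator_apply, Set.mem_ofPred_eq, inSec_smul hr, e, e2,
      Set.mem_Iic, smul_eq_mul, Pi.one_apply]
    by_cases h1 : r ≤ 1 <;> by_cases h2 : InSec a b (Real.cos φ) (Real.sin φ) <;> simp [h1, h2]
  rw [setIntegral_congr_fun polarCoord.open_target.measurableSet h1, polarCoord_target,
    Measure.volume_eq_prod]
  rw [setIntegral_prod_mul (fun r : ℝ => r * (Set.Iic (1:ℝ)).indicator (fun _ => (1:ℝ)) r)
    ({φ : ℝ | InSec a b (Real.cos φ) (Real.sin φ)}.indicator (fun _ => (1:ℝ)))]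
  rw [radial_integral, angle_integral hab hb]
  ring

/-- The standard lattice. -/
def stdL : Submodule ℤ (Fin 2 → ℝ) := Submodule.span ℤ (Set.range (Pi.basisFun ℝ (Fin 2)))

instance : DiscreteTopology stdL := by unfold stdL; infer_instance
instance : IsZLattice ℝ stdL := by unfold stdL; infer_instance

lemma mem_stdL (x : Fin 2 → ℝ) : x ∈ stdL ↔ ∃ m n : ℤ, x = ![(m:ℝ), (n:ℝ)] := by
  unfold stdL
  rw [Module.Basis.mem_span_iff_repr_mem]
  simp only [Pi.basisFun_repr]
  constructor
  · intro h
    obtain ⟨m, hm⟩ := h 0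
    obtain ⟨n, hn⟩ := h 1
    refine ⟨m, n, ?_⟩
    ext i
    fin_cases i
    · simpa using hm.symm
    · simpa using hn.symm
  · rintro ⟨m, n, rfl⟩ i
    fin_cases i
    · exact ⟨m, by simp⟩
    · exact ⟨n, by simp⟩

/-- lattice points in a sector -/
def LSet (a b R : ℝ) : Set (ℤ × ℤ) :=
  {w | InSec a b w.1 w.2 ∧ (w.1 : ℝ) ^ 2 + (w.2 : ℝ) ^ 2 ≤ R}

lemma cvx (a b : ℝ) :
    Convex ℝ {x : Fin 2 → ℝ | InSec a b (x 0) (x 1) ∧ (x 0) ^ 2 + (x 1) ^ 2 ≤ 1} := by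
  intro x hx y hy s t hs ht hst
  obtain ⟨⟨h1, h2⟩, h3⟩ := hx
  obtain ⟨⟨h4, h5⟩, h6⟩ := hy
  refine ⟨⟨?_, ?_⟩, ?_⟩
  · simp only [Pi.add_apply, Pi.smul_apply, smul_eq_mul]
    have := mul_nonneg hs h1
    have := mul_nonneg ht h4
    linarith
  · simp only [Pi.add_apply, Pi.smul_apply, smul_eq_mul]
    have := mul_nonpos_of_nonneg_of_nonpos hs h2
    have := mul_nonpos_of_nonneg_of_nonpos ht h5
    linarith
  · simp only [Pi.add_apply, Pi.smul_apply, smul_eq_mul]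
    have hs' : s = 1 - t := by linarith
    subst hs'
    have e1 := mul_nonneg (mul_nonneg hs ht) (sq_nonneg (x 0 - y 0))
    have e2 := mul_nonneg (mul_nonneg hs ht) (sq_nonneg (x 1 - y 1))
    have e3 := mul_le_mul_of_nonneg_left h3 hs
    have e4 := mul_le_mul_of_nonneg_left h6 ht
    linarith

open MeasureTheory in
lemma LSet_tendsto : ∃ κ : ℝ, 0 < κ ∧ ∀ a b : ℝ, a < b → b - a < Real.pi →
    Tendsto (fun R : ℝ => ((LSet a b R).ncard : ℝ) / R) atTop (nhds (κ * (b - a))) := by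
  refine ⟨1 / (2 * ZLattice.covolume stdL),
    by have := ZLattice.covolume_pos stdL volume; positivity, fun a b hab hb => ?_⟩
  have key := ZLattice.covolume.tendsto_card_le_div stdL
    (X := {x : Fin 2 → ℝ | InSec a b (x 0) (x 1)}) (F := fun x => (x 0) ^ 2 + (x 1) ^ 2)
    ?_ ?_ ?_ ?_ ?_
  · have hvol : volume.real {x : Fin 2 → ℝ | x ∈ {x : Fin 2 → ℝ | InSec a b (x 0) (x 1)} ∧
        (x 0) ^ 2 + (x 1) ^ 2 ≤ 1} = (b - a) / 2 := by
      rw [← sector_volume hab hb]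
      have := (volume_preserving_finTwoArrow ℝ).measure_preimage
        (measurableSet_sec a b).nullMeasurableSet
      rw [measureReal_def, measureReal_def, ← this]
      rfl
    rw [hvol] at key
    convert key using 2
    · rename_i R
      congr 2
      rw [← Nat.card_coe_set_eq]
      refine Nat.card_congr (Equiv.ofBijective
        (fun w => ⟨![(w.1.1 : ℝ), (w.1.2 : ℝ)], ?_⟩) ⟨?_, ?_⟩)
      · exact ⟨⟨by simpa using w.2.1, by simpa using w.2.2⟩, (mem_stdL _).2 ⟨_, _, rfl⟩⟩
      · rintro ⟨⟨m, n⟩, h⟩ ⟨⟨m', n'⟩, h'⟩ he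
        replace he := congrArg Subtype.val he
        have e0 := congrFun he 0
        have e1 := congrFun he 1
        simp at e0 e1
        simp [e0, e1]
      · rintro ⟨x, ⟨h1, h2⟩, h3⟩
        obtain ⟨m, n, rfl⟩ := (mem_stdL _).1 h3
        exact ⟨⟨(m, n), by simpa using h1, by simpa using h2⟩, rfl⟩
    · field_simp
  · intro x r hx hr
    simpa [inSec_smul hr] using hx
  · intro x r hr
    simp
    ring
  · refine (Metric.isBounded_closedBall (x := (0 : Fin 2 → ℝ)) (r := 1)).subset ?_
    rintro x ⟨_, hx⟩
    rw [mem_closedBall_zero_iff, pi_norm_le_iff_of_nonneg zero_le_one]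
    intro i
    rw [Real.norm_eq_abs, ← sq_le_one_iff_abs_le_one]
    fin_cases i
    · change (x 0) ^ 2 ≤ 1
      nlinarith [sq_nonneg (x 1)]
    · change (x 1) ^ 2 ≤ 1
      nlinarith [sq_nonneg (x 0)]
  · exact (volume_preserving_finTwoArrow ℝ).measurable (measurableSet_sec a b)
  · exact (cvx a b).addHaar_frontier volume


lemma LSet_subset (a b R : ℝ) (K : ℕ) (hK : R < (K + 1) ^ 2) :
    LSet a b R ⊆ ↑(Finset.Icc (-(K:ℤ)) K ×ˢ Finset.Icc (-(K:ℤ)) K) := by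
  rintro ⟨m, n⟩ ⟨_, h⟩
  simp only at h
  have aux : ∀ k : ℤ, (k : ℝ) ^ 2 < (K + 1) ^ 2 → -(K:ℤ) ≤ k ∧ k ≤ K := by
    intro k hk
    have : k ^ 2 < ((K:ℤ) + 1) ^ 2 := by exact_mod_cast hk
    have := abs_lt_of_sq_lt_sq this (by positivity)
    rw [abs_lt] at this
    omega
  have h1 := aux m (by nlinarith [sq_nonneg (n : ℝ)])
  have h2 := aux n (by nlinarith [sq_nonneg (m : ℝ)])
  simp only [Finset.coe_product, Finset.coe_Icc, Set.mem_prod, Set.mem_Icc]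
  exact ⟨h1, h2⟩

lemma LSet_finite (a b R : ℝ) : (LSet a b R).Finite := by
  obtain ⟨K, hK⟩ := exists_nat_gt R
  refine (Finset.finite_toSet _).subset (LSet_subset a b R K ?_)
  have : (0:ℝ) ≤ K := K.cast_nonneg
  nlinarith

lemma LSet_ncard_le (a b R : ℝ) (hR : 1 ≤ R) : ((LSet a b R).ncard : ℝ) ≤ 9 * R := by
  set K := Nat.sqrt ⌊R⌋₊ with hKdef
  have h1 : R < (K + 1 : ℝ) ^ 2 := by
    have := Nat.sqrt_lt' .. |>.1 (Nat.lt_succ_self (Nat.sqrt ⌊R⌋₊))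
    have h3 : R < ⌊R⌋₊ + 1 := Nat.lt_floor_add_one R
    have h4 : ((⌊R⌋₊ + 1 : ℕ) : ℝ) ≤ ((K + 1) ^ 2 : ℕ) := by exact_mod_cast this
    push_cast at h4
    linarith
  have h2 : (K : ℝ) ^ 2 ≤ R := by
    have : K ^ 2 ≤ ⌊R⌋₊ := by rw [sq]; exact Nat.sqrt_le _
    have h3 : (⌊R⌋₊ : ℝ) ≤ R := Nat.floor_le (by linarith)
    have h4 : ((K ^ 2 : ℕ) : ℝ) ≤ ⌊R⌋₊ := by exact_mod_cast this
    push_cast at h4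
    linarith
  have hK1 : 1 ≤ K := by
    rw [hKdef, Nat.le_sqrt]
    exact (Nat.le_floor_iff (by linarith)).2 (by simpa using hR)
  have hK1' : (1:ℝ) ≤ K := by exact_mod_cast hK1
  have h5 := Set.ncard_le_ncard (LSet_subset a b R K h1) (Finset.finite_toSet _)
  rw [Set.ncard_coe_finset, Finset.card_product, Int.card_Icc] at h5
  have h6 : ((K:ℤ) + 1 - (-(K:ℤ))).toNat = 2 * K + 1 := by omega
  rw [h6] at h5
  have h7 : ((LSet a b R).ncard : ℝ) ≤ ((2 * K + 1) * (2 * K + 1) : ℕ) := by exact_mod_cast h5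
  push_cast at h7
  nlinarith

/-- Points of odd norm. -/
def OddSet (a b R : ℝ) : Set (ℤ × ℤ) := {w | w ∈ LSet a b R ∧ Odd (w.1 + w.2)}

lemma OddSet_finite (a b R : ℝ) : (OddSet a b R).Finite :=
  (LSet_finite a b R).subset fun _ h => h.1

lemma OddSet_empty (a b R : ℝ) (hR : R < 1) : OddSet a b R = ∅ := by
  ext ⟨m, n⟩
  simp only [Set.mem_empty_iff_false, iff_false]
  rintro ⟨⟨_, h⟩, ho⟩
  simp only at h ho
  have h1 : (m : ℝ) ^ 2 + (n : ℝ) ^ 2 < 1 := by linarith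
  have h2 : m ^ 2 + n ^ 2 < 1 := by exact_mod_cast h1
  have hm : m = 0 := by
    by_contra hc
    have : 0 < m ^ 2 := by positivity
    nlinarith [sq_nonneg n]
  have hn : n = 0 := by
    by_contra hc
    have : 0 < n ^ 2 := by positivity
    nlinarith [sq_nonneg m]
  subst hm hn
  simp at ho

lemma OddSet_ncard_le (a b R : ℝ) (hR : 0 ≤ R) : ((OddSet a b R).ncard : ℝ) ≤ 9 * R := by
  rcases lt_or_ge R 1 with h | h
  · rw [OddSet_empty a b R h]
    simpa using hR
  · refine le_trans ?_ (LSet_ncard_le a b R h)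
    exact_mod_cast Set.ncard_le_ncard (fun _ (h : _ ∈ OddSet a b R) => h.1) (LSet_finite a b R)

lemma inSec_rot (a b x y : ℝ) :
    InSec a b (x - y) (x + y) ↔ InSec (a - Real.pi / 4) (b - Real.pi / 4) x y := by
  have h2 : (0:ℝ) < √2 := by positivity
  have hs : √2 * √2 = 2 := Real.mul_self_sqrt (by norm_num)
  have key : ∀ c : ℝ, Real.cos c * (x + y) - Real.sin c * (x - y)
      = √2 * (Real.cos (c - Real.pi / 4) * y - Real.sin (c - Real.pi / 4) * x) := by
    intro c
    rw [Real.cos_sub, Real.sin_sub, Real.cos_pi_div_four, Real.sin_pi_div_four]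
    linear_combination (-1/2) * (Real.cos c * (x + y) - Real.sin c * (x - y)) * hs
  unfold InSec
  rw [key, key]
  refine and_congr ?_ ?_
  · rw [mul_nonneg_iff_of_pos_left h2]
  · refine ⟨fun h => ?_, fun h => mul_nonpos_of_nonneg_of_nonpos h2.le h⟩
    by_contra hc
    push Not at hc
    have := mul_pos h2 hc
    linarith

/-- multiplication by `1 + i` -/
def mulI (w : ℤ × ℤ) : ℤ × ℤ := (w.1 - w.2, w.1 + w.2)

lemma mulI_inj : Function.Injective mulI := by
  rintro ⟨m, n⟩ ⟨m', n'⟩ h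
  simp only [mulI, Prod.mk.injEq] at h
  ext <;> simp <;> omega

lemma mulI_mem (a b R : ℝ) (w : ℤ × ℤ) :
    mulI w ∈ LSet a b R ↔ w ∈ LSet (a - Real.pi / 4) (b - Real.pi / 4) (R / 2) := by
  unfold LSet mulI
  simp only [Set.mem_ofPred_eq, Int.cast_sub, Int.cast_add]
  rw [inSec_rot]
  refine and_congr Iff.rfl ?_
  constructor <;> intro h <;> nlinarith

lemma mulI_range (w : ℤ × ℤ) (h : ¬ Odd (w.1 + w.2)) : ∃ v, mulI v = w := by
  rw [Int.not_odd_iff_even] at h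
  obtain ⟨k, hk⟩ := h
  refine ⟨(k, k - w.1), ?_⟩
  ext <;> simp [mulI]
  linarith

lemma LSet_split (a b R : ℝ) : (LSet a b R).ncard =
    (OddSet a b R).ncard + (LSet (a - Real.pi / 4) (b - Real.pi / 4) (R / 2)).ncard := by
  rw [← Set.ncard_image_of_injective (LSet (a - Real.pi / 4) (b - Real.pi / 4) (R / 2)) mulI_inj,
    ← Set.ncard_union_eq ?_ (OddSet_finite _ _ _) ((LSet_finite _ _ _).image _)]
  · congr 1
    ext w
    constructor
    · intro hw
      by_cases ho : Odd (w.1 + w.2)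
      · exact Or.inl ⟨hw, ho⟩
      · obtain ⟨v, rfl⟩ := mulI_range w ho
        exact Or.inr ⟨v, (mulI_mem _ _ _ _).1 hw, rfl⟩
    · rintro (h | ⟨v, hv, rfl⟩)
      · exact h.1
      · exact (mulI_mem _ _ _ _).2 hv
  · rw [Set.disjoint_left]
    rintro w ⟨_, ho⟩ ⟨v, hv, rfl⟩
    simp only [mulI] at ho
    rw [show v.1 - v.2 + (v.1 + v.2) = 2 * v.1 by ring] at ho
    exact absurd ho (by simp)

lemma OddSet_tendsto : ∃ κ : ℝ, 0 < κ ∧ ∀ a b : ℝ, a < b → b - a < Real.pi →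
    Tendsto (fun R : ℝ => ((OddSet a b R).ncard : ℝ) / R) atTop (nhds (κ * (b - a))) := by
  obtain ⟨κ, hκ, h⟩ := LSet_tendsto
  refine ⟨κ / 2, by positivity, fun a b hab hb => ?_⟩
  have h1 := h a b hab hb
  have h2 := (h (a - Real.pi / 4) (b - Real.pi / 4) (by linarith) (by linarith)).comp
    (tendsto_id.atTop_div_const (show (0:ℝ) < 2 by norm_num))
  have h3 := h1.sub (h2.div_const 2)
  convert h3 using 2
  · rename_i R
    simp only [Function.comp, id]
    rw [LSet_split a b R]
    push_cast
    field_simp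
    ring
  · ring

/-- Coprime points of odd norm. -/
def CopSet (a b R : ℝ) : Set (ℤ × ℤ) := {w | w ∈ OddSet a b R ∧ IsCoprime w.1 w.2}

lemma OddSet_dvd (a b R : ℝ) (d : ℕ) (hd : d ≠ 0) :
    {w | w ∈ OddSet a b R ∧ d ∣ Int.gcd w.1 w.2}.ncard
      = if Odd d then (OddSet a b (R / d ^ 2)).ncard else 0 := by
  have hdr : (0:ℝ) < d := by exact_mod_cast Nat.pos_of_ne_zero hd
  have hdz : (d:ℤ) ≠ 0 := by exact_mod_cast hd
  split_ifs with ho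
  · have hinj : Function.Injective (fun w : ℤ × ℤ => ((d:ℤ) * w.1, (d:ℤ) * w.2)) := by
      rintro ⟨m, n⟩ ⟨m', n'⟩ h
      simpa [hdz, hd] using h
    rw [← Set.ncard_image_of_injective (OddSet a b (R / d ^ 2)) hinj]
    have hoz : Odd (d:ℤ) := by exact_mod_cast ho
    have key : ∀ m n : ℤ, ((d:ℤ) * m, (d:ℤ) * n) ∈ OddSet a b R ↔
        (m, n) ∈ OddSet a b (R / d ^ 2) := by
      intro m n
      unfold OddSet LSet
      simp only [Set.mem_ofPred_eq, Int.cast_mul, Int.cast_natCast, inSec_smul hdr, ← mul_add,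
        Int.odd_mul, hoz, true_and]
      rw [le_div_iff₀ (by positivity)]
      ring_nf
    congr 1
    ext ⟨u, v⟩
    constructor
    · rintro ⟨h1, h2⟩
      obtain ⟨m, rfl⟩ : (d:ℤ) ∣ u := dvd_trans (Int.natCast_dvd_natCast.2 h2) (Int.gcd_dvd_left ..)
      obtain ⟨n, rfl⟩ : (d:ℤ) ∣ v := dvd_trans (Int.natCast_dvd_natCast.2 h2) (Int.gcd_dvd_right ..)
      exact ⟨(m, n), (key m n).1 h1, rfl⟩
    · rintro ⟨⟨m, n⟩, h1, h2⟩
      simp only [Prod.mk.injEq] at h2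
      obtain ⟨rfl, rfl⟩ := h2
      refine ⟨(key m n).2 h1, ?_⟩
      exact Int.dvd_gcd (Dvd.intro _ rfl) (Dvd.intro _ rfl)
  · convert Set.ncard_empty (ℤ × ℤ)
    ext ⟨u, v⟩
    simp only [Set.mem_empty_iff_false, iff_false]
    rintro ⟨⟨_, h1⟩, h2⟩
    simp only at h1 h2
    rw [Nat.not_odd_iff_even] at ho
    have h3 : (2:ℤ) ∣ d := by exact_mod_cast ho.two_dvd
    have h4 : (2:ℤ) ∣ u :=
      h3.trans (dvd_trans (Int.natCast_dvd_natCast.2 h2) (Int.gcd_dvd_left ..))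
    have h5 : (2:ℤ) ∣ v :=
      h3.trans (dvd_trans (Int.natCast_dvd_natCast.2 h2) (Int.gcd_dvd_right ..))
    have h6 := dvd_add h4 h5
    rw [← Int.not_even_iff_odd, even_iff_two_dvd] at h1
    exact h1 h6

open ArithmeticFunction in
lemma sum_mu (g : ℕ) : ∑ d ∈ g.divisors, (moebius d : ℤ) = if g = 1 then 1 else 0 := by
  rw [← coe_mul_zeta_apply, moebius_mul_coe_zeta, one_apply]

open ArithmeticFunction in
lemma CopSet_ncard (a b R : ℝ) (hR : 0 ≤ R) : ((CopSet a b R).ncard : ℝ) =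
    ∑' d : ℕ, if Odd d then (moebius d : ℝ) * (OddSet a b (R / d ^ 2)).ncard else 0 := by
  classical
  obtain ⟨K, hK⟩ := exists_nat_gt R
  have hfin := OddSet_finite a b R
  set S := hfin.toFinset with hS
  have hgcd : ∀ w ∈ S, Int.gcd w.1 w.2 ≠ 0 ∧ Int.gcd w.1 w.2 ≤ K := by
    rintro ⟨m, n⟩ hw
    rw [hS, Set.Finite.mem_toFinset] at hw
    obtain ⟨⟨_, h1⟩, h2⟩ := hw
    simp only at h1 h2
    have h0 : Int.gcd m n ≠ 0 := by
      intro h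
      rw [Int.gcd_eq_zero_iff] at h
      obtain ⟨rfl, rfl⟩ := h
      simp at h2
    refine ⟨h0, ?_⟩
    by_contra hc
    push Not at hc
    simp only at hc
    have aux : ∀ k : ℤ, k ≠ 0 → (Int.gcd m n : ℤ) ∣ k → (K:ℝ) < (k:ℝ) ^ 2 := by
      intro k hk hd
      have h3 : Int.gcd m n ≤ k.natAbs :=
        Nat.le_of_dvd (Int.natAbs_pos.2 hk) (Int.natCast_dvd.1 hd)
      have h4 : (K:ℤ) < |k| := by rw [Int.abs_eq_natAbs]; exact_mod_cast lt_of_lt_of_le hc h3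
      have h5 : (K:ℤ) < k ^ 2 := by
        rw [← sq_abs]; nlinarith [abs_nonneg k]
      exact_mod_cast h5
    by_cases hm : m = 0
    · have hn : n ≠ 0 := by
        rintro rfl
        exact h0 (by simp [hm])
      have := aux n hn (Int.gcd_dvd_right ..)
      nlinarith [sq_nonneg (m:ℝ)]
    · have := aux m hm (Int.gcd_dvd_left ..)
      nlinarith [sq_nonneg (n:ℝ)]
  have h1 : ((CopSet a b R).ncard : ℤ) =
      ∑ d ∈ Finset.Icc 1 K, if Odd d then moebius d * ((OddSet a b (R / d ^ 2)).ncard : ℤ) else 0 := by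
    have e1 : (CopSet a b R) = ↑(S.filter (fun w => Int.gcd w.1 w.2 = 1)) := by
      ext w
      simp only [CopSet, hS, Finset.coe_filter, Set.Finite.mem_toFinset, Set.mem_ofPred_eq,
        Int.isCoprime_iff_gcd_eq_one]
    rw [e1, Set.ncard_coe_finset, Finset.card_filter]
    push_cast
    have e2 : ∀ w ∈ S, (if Int.gcd w.1 w.2 = 1 then (1:ℤ) else 0)
        = ∑ d ∈ Finset.Icc 1 K, if d ∣ Int.gcd w.1 w.2 then moebius d else 0 := by
      intro w hw
      obtain ⟨g0, gK⟩ := hgcd w hw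
      rw [← sum_mu, ← Finset.sum_filter]
      apply Finset.sum_congr _ (fun _ _ => rfl)
      ext d
      simp only [Nat.mem_divisors, Finset.mem_filter, Finset.mem_Icc]
      constructor
      · rintro ⟨h, _⟩
        exact ⟨⟨Nat.pos_of_dvd_of_pos h (Nat.pos_of_ne_zero g0),
          (Nat.le_of_dvd (Nat.pos_of_ne_zero g0) h).trans gK⟩, h⟩
      · rintro ⟨_, h⟩
        exact ⟨h, g0⟩
    rw [Finset.sum_congr rfl e2, Finset.sum_comm]
    apply Finset.sum_congr rfl
    intro d hd
    have hd0 : d ≠ 0 := by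
      have := (Finset.mem_Icc.1 hd).1
      omega
    have e3 := OddSet_dvd a b R d hd0
    have e4 : {w | w ∈ OddSet a b R ∧ d ∣ Int.gcd w.1 w.2}
        = ↑(S.filter (fun w => d ∣ Int.gcd w.1 w.2)) := by
      ext w
      simp [hS]
    rw [e4, Set.ncard_coe_finset] at e3
    rw [← Finset.sum_filter, Finset.sum_const, e3]
    split_ifs
    · rw [nsmul_eq_mul, mul_comm]
    · simp
  rw [tsum_eq_sum (s := Finset.Icc 1 K)]
  · have := congrArg (Int.cast : ℤ → ℝ) h1
    push_cast at this
    exact this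
  · intro d hd
    split_ifs with ho
    · have hd1 : d ≠ 0 := by
        rintro rfl
        simp at ho
      have hd2 : K < d := by
        by_contra hc
        exact hd (Finset.mem_Icc.2 ⟨Nat.pos_of_ne_zero hd1, by omega⟩)
      have hd3 : (K:ℝ) + 1 ≤ d := by exact_mod_cast hd2
      rw [OddSet_empty]
      · simp
      · have hk0 : (0:ℝ) ≤ K := K.cast_nonneg
        rw [div_lt_one (by nlinarith)]
        nlinarith
    · rfl

open ArithmeticFunction in
lemma moebius_abs_le (d : ℕ) : |(moebius d : ℝ)| ≤ 1 := by
  exact_mod_cast abs_moebius_le_one (n := d)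

open ArithmeticFunction in
lemma const_pos : 0 < ∑' d : ℕ, if Odd d then (moebius d : ℝ) * (1 / (d:ℝ) ^ 2) else 0 := by
  have hz := hasSum_zeta_two
  have hb : ∀ d : ℕ, |if Odd d then (moebius d : ℝ) * (1 / (d:ℝ) ^ 2) else 0| ≤ 1 / (d:ℝ) ^ 2 := by
    intro d
    split_ifs
    · rw [abs_mul, abs_of_nonneg (show (0:ℝ) ≤ 1 / (d:ℝ) ^ 2 by positivity)]
      exact mul_le_of_le_one_left (by positivity) (moebius_abs_le d)
    · simp
  have hs : Summable fun d : ℕ => if Odd d then (moebius d : ℝ) * (1 / (d:ℝ) ^ 2) else 0 :=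
    Summable.of_norm_bounded hz.summable hb
  have h1 := (hs.add hz.summable).le_tsum 1 (fun d _ => by
    have := (abs_le.1 (hb d)).1
    linarith)
  rw [hs.tsum_add hz.summable, hz.tsum_eq] at h1
  simp at h1
  have : Real.pi ^ 2 < 10 := by
    have := Real.pi_lt_d2
    have := Real.pi_pos
    nlinarith
  norm_num at h1 ⊢
  linarith

open ArithmeticFunction in
lemma CopSet_tendsto : ∃ κ : ℝ, 0 < κ ∧ ∀ a b : ℝ, a < b → b - a < Real.pi →
    Tendsto (fun R : ℝ => ((CopSet a b R).ncard : ℝ) / R) atTop (nhds (κ * (b - a))) := by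
  obtain ⟨κ, hκ, h⟩ := OddSet_tendsto
  refine ⟨κ * ∑' d : ℕ, if Odd d then (moebius d : ℝ) * (1 / (d:ℝ) ^ 2) else 0,
    mul_pos hκ const_pos, fun a b hab hb => ?_⟩
  have h0 := h a b hab hb
  have key := tendsto_tsum_of_dominated_convergence (𝓕 := (atTop : Filter ℝ))
    (f := fun R (d : ℕ) => if Odd d then (moebius d : ℝ) * (OddSet a b (R / d ^ 2)).ncard / R else 0)
    (g := fun d : ℕ => if Odd d then (moebius d : ℝ) * (1 / (d:ℝ) ^ 2) * (κ * (b - a)) else 0)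
    (bound := fun d : ℕ => 9 * (1 / (d:ℝ) ^ 2)) (hasSum_zeta_two.summable.mul_left 9) ?_ ?_
  · have e1 : ∑' d : ℕ, (if Odd d then (moebius d : ℝ) * (1 / (d:ℝ) ^ 2) * (κ * (b - a)) else 0)
      = (κ * ∑' d : ℕ, if Odd d then (moebius d : ℝ) * (1 / (d:ℝ) ^ 2) else 0) * (b - a) := by
      rw [mul_right_comm, mul_comm (κ * (b - a)), ← tsum_mul_right]
      congr 1
      ext d
      split_ifs <;> simp
    rw [e1] at key
    refine key.congr' ?_
    filter_upwards [eventually_ge_atTop 0] with R hR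
    rw [CopSet_ncard a b R hR, ← tsum_div_const]
    congr 1
    ext d
    split_ifs <;> simp
  · intro d
    by_cases ho : Odd d
    · have hd : d ≠ 0 := by
        rintro rfl
        simp at ho
      have hdr : (0:ℝ) < d := by exact_mod_cast Nat.pos_of_ne_zero hd
      simp only [ho, if_true]
      have := (h0.comp (tendsto_id.atTop_div_const (show (0:ℝ) < (d:ℝ) ^ 2 by positivity))).const_mul
        ((moebius d : ℝ) * (1 / (d:ℝ) ^ 2))
      refine this.congr fun R => ?_
      simp only [Function.comp, id]
      field_simp
    · simp only [ho, if_false]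
      exact tendsto_const_nhds
  · filter_upwards [eventually_gt_atTop 0] with R hR d
    split_ifs with ho
    · have hd : d ≠ 0 := by
        rintro rfl
        simp at ho
      have hdr : (0:ℝ) < d := by exact_mod_cast Nat.pos_of_ne_zero hd
      have h1 := OddSet_ncard_le a b (R / d ^ 2) (by positivity)
      rw [Real.norm_eq_abs, abs_div, abs_mul, abs_of_pos hR, Nat.abs_cast, div_le_iff₀ hR]
      calc |(moebius d : ℝ)| * ((OddSet a b (R / d ^ 2)).ncard : ℝ)
          ≤ 1 * (9 * (R / d ^ 2)) := mul_le_mul (moebius_abs_le d) h1 (by positivity) zero_le_one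
        _ = _ := by ring
    · simp


/-- The rational point attached to `(m,n)`. -/
def pt (w : ℤ × ℤ) : ℚ × ℚ :=
  (((w.1:ℚ) ^ 2 - (w.2:ℚ) ^ 2) / ((w.1:ℚ) ^ 2 + (w.2:ℚ) ^ 2),
    (2 * (w.1:ℚ) * (w.2:ℚ)) / ((w.1:ℚ) ^ 2 + (w.2:ℚ) ^ 2))

lemma norm_pos_of_coprime {m n : ℤ} (h : IsCoprime m n) : 0 < m ^ 2 + n ^ 2 := by
  by_contra hc
  have hm : m = 0 := by
    by_contra hm
    have : 0 < m ^ 2 := by positivity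
    nlinarith [sq_nonneg n]
  have hn : n = 0 := by
    by_contra hn
    have : 0 < n ^ 2 := by positivity
    nlinarith [sq_nonneg m]
  subst hm hn
  exact not_isCoprime_zero_zero h

lemma pt_integral {m n : ℤ} (h : IsCoprime m n) (k : ℕ) :
    ((∃ a : ℤ, (k : ℚ) * (pt (m, n)).1 = a) ∧ (∃ b : ℤ, (k : ℚ) * (pt (m, n)).2 = b)) ↔
      (m ^ 2 + n ^ 2) ∣ 2 * (k : ℤ) := by
  have hs := norm_pos_of_coprime h
  have hsq : (0:ℚ) < (m:ℚ) ^ 2 + (n:ℚ) ^ 2 := by exact_mod_cast hs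
  have e1 : ∀ a : ℤ, (k : ℚ) * (pt (m, n)).1 = a ↔ (k:ℤ) * (m ^ 2 - n ^ 2) = (m ^ 2 + n ^ 2) * a := by
    intro a
    simp only [pt]
    rw [← mul_div_assoc, div_eq_iff hsq.ne']
    constructor
    · intro h
      have : ((k * (m ^ 2 - n ^ 2) : ℤ) : ℚ) = (((m ^ 2 + n ^ 2) * a : ℤ) : ℚ) := by
        push_cast; linarith
      exact_mod_cast this
    · intro h
      have : ((k * (m ^ 2 - n ^ 2) : ℤ) : ℚ) = (((m ^ 2 + n ^ 2) * a : ℤ) : ℚ) := by rw [h]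
      push_cast at this
      linarith
  have e2 : ∀ a : ℤ, (k : ℚ) * (pt (m, n)).2 = a ↔ (k:ℤ) * (2 * m * n) = (m ^ 2 + n ^ 2) * a := by
    intro a
    simp only [pt]
    rw [← mul_div_assoc, div_eq_iff hsq.ne']
    constructor
    · intro h
      have : ((k * (2 * m * n) : ℤ) : ℚ) = (((m ^ 2 + n ^ 2) * a : ℤ) : ℚ) := by
        push_cast; linarith
      exact_mod_cast this
    · intro h
      have : ((k * (2 * m * n) : ℤ) : ℚ) = (((m ^ 2 + n ^ 2) * a : ℤ) : ℚ) := by rw [h]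
      push_cast at this
      linarith
  simp only [e1, e2]
  constructor
  · rintro ⟨⟨a, ha⟩, -⟩
    obtain ⟨u, v, huv⟩ : IsCoprime (m ^ 2) (n ^ 2) := h.pow
    refine ⟨u * (a + k) + v * (k - a), ?_⟩
    linear_combination (-2 * (k:ℤ)) * huv + (u - v) * ha
  · rintro ⟨c, hc⟩
    exact ⟨⟨c * m ^ 2 - k, by linear_combination m ^ 2 * hc⟩,
      ⟨c * m * n, by linear_combination m * n * hc⟩⟩

lemma height_pt {m n : ℤ} (h : IsCoprime m n) (H : ℕ) :
    height (pt (m, n)).1 (pt (m, n)).2 ≤ H ↔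
      (Odd (m + n) ∧ (m:ℝ) ^ 2 + (n:ℝ) ^ 2 ≤ H) ∨
      (¬ Odd (m + n) ∧ (m:ℝ) ^ 2 + (n:ℝ) ^ 2 ≤ 2 * H) := by
  have hs := norm_pos_of_coprime h
  set s := m ^ 2 + n ^ 2 with hsdef
  have c1 : (m:ℝ) ^ 2 + (n:ℝ) ^ 2 ≤ H ↔ s ≤ H := by
    rw [hsdef]; exact_mod_cast Iff.rfl
  have c2 : (m:ℝ) ^ 2 + (n:ℝ) ^ 2 ≤ 2 * H ↔ s ≤ 2 * H := by
    rw [hsdef]; exact_mod_cast Iff.rfl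
  have par : Odd (m + n) ↔ Odd s := by
    rw [hsdef]; simp [Int.odd_add, parity_simps]
  rw [c1, c2, par]
  have hset : {k : ℕ | 0 < k ∧ (∃ a : ℤ, (k : ℚ) * (pt (m, n)).1 = a) ∧
      (∃ b : ℤ, (k : ℚ) * (pt (m, n)).2 = b)} = {k : ℕ | 0 < k ∧ s ∣ 2 * (k:ℤ)} := by
    ext k
    simp only [Set.mem_ofPred_eq, pt_integral h k, hsdef]
  unfold height
  rw [hset]
  have hne : {k : ℕ | 0 < k ∧ s ∣ 2 * (k:ℤ)}.Nonempty :=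
    ⟨s.toNat, by omega, by rw [Int.toNat_of_nonneg hs.le]; exact Dvd.intro_left _ rfl⟩
  have hmem := Nat.sInf_mem hne
  obtain ⟨h0, hd⟩ := hmem
  set k := sInf {k : ℕ | 0 < k ∧ s ∣ 2 * (k:ℤ)} with hk
  by_cases ho : Odd s
  · simp only [ho, true_and, not_true, false_and, or_false]
    constructor
    · intro hkH
      have hcop : IsCoprime s 2 := by
        obtain ⟨j, hj⟩ := ho
        exact ⟨1, -j, by rw [hj]; ring⟩
      have := Int.le_of_dvd (by exact_mod_cast h0) (hcop.dvd_of_dvd_mul_left hd)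
      omega
    · intro hsH
      have : k ≤ s.toNat := Nat.sInf_le
        ⟨by omega, by rw [Int.toNat_of_nonneg hs.le]; exact Dvd.intro_left _ rfl⟩
      omega
  · simp only [ho, false_and, not_false_eq_true, true_and, false_or]
    constructor
    · intro hkH
      have := Int.le_of_dvd (by omega) hd
      omega
    · intro hsH
      rw [Int.not_odd_iff_even] at ho
      obtain ⟨j, hj⟩ := ho
      have : k ≤ j.toNat := Nat.sInf_le
        ⟨by omega, by rw [Int.toNat_of_nonneg (by omega), hj, two_mul]⟩
      omega

/-- The parametrizing set. -/
def WSet (a b : ℝ) (H : ℕ) : Set (ℤ × ℤ) :=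
  {w | InSec a b w.1 w.2 ∧ IsCoprime w.1 w.2 ∧
    ((Odd (w.1 + w.2) ∧ (w.1:ℝ) ^ 2 + (w.2:ℝ) ^ 2 ≤ H) ∨
      (¬ Odd (w.1 + w.2) ∧ (w.1:ℝ) ^ 2 + (w.2:ℝ) ^ 2 ≤ 2 * H))}

lemma mulI_coprime (m n : ℤ) :
    IsCoprime (mulI (m, n)).1 (mulI (m, n)).2 ↔ Odd (m + n) ∧ IsCoprime m n := by
  simp only [mulI]
  constructor
  · rintro ⟨u, v, h⟩
    refine ⟨?_, ⟨u + v, v - u, by linear_combination h⟩⟩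
    by_contra hc
    rw [Int.not_odd_iff_even] at hc
    obtain ⟨j, hj⟩ := hc
    have : 2 * (u * (j - n) + v * j) = 1 := by
      linear_combination h - (u + v) * hj
    omega
  · rintro ⟨⟨j, hj⟩, ⟨u, v, h⟩⟩
    refine ⟨-j * (u - v), 1 - j * (u + v), ?_⟩
    linear_combination (-2 * j) * h + hj

lemma CopSet_finite (a b R : ℝ) : (CopSet a b R).Finite :=
  (OddSet_finite a b R).subset fun _ h => h.1

lemma WSet_eq (a b : ℝ) (H : ℕ) : WSet a b H =
    CopSet a b H ∪ mulI '' CopSet (a - Real.pi / 4) (b - Real.pi / 4) H := by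
  ext w
  constructor
  · rintro ⟨h1, h2, (⟨h3, h4⟩ | ⟨h3, h4⟩)⟩
    · exact Or.inl ⟨⟨⟨h1, h4⟩, h3⟩, h2⟩
    · obtain ⟨⟨m, n⟩, rfl⟩ := mulI_range w h3
      have h5 := (mulI_coprime m n).1 h2
      have h6 := (mulI_mem a b (2 * H) (m, n)).1 ⟨h1, h4⟩
      rw [mul_div_cancel_left₀ _ two_ne_zero] at h6
      exact Or.inr ⟨(m, n), ⟨⟨h6, h5.1⟩, h5.2⟩, rfl⟩
  · rintro (⟨⟨⟨h1, h4⟩, h3⟩, h2⟩ | ⟨⟨m, n⟩, ⟨⟨h6, h5⟩, h7⟩, rfl⟩)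
    · exact ⟨h1, h2, Or.inl ⟨h3, h4⟩⟩
    · have h8 := (mulI_mem a b (2 * H) (m, n)).2
        (by rwa [mul_div_cancel_left₀ _ two_ne_zero])
      refine ⟨h8.1, (mulI_coprime m n).2 ⟨h5, h7⟩, Or.inr ⟨?_, h8.2⟩⟩
      simp only [mulI]
      rw [show m - n + (m + n) = 2 * m by ring]
      simp

lemma WSet_finite (a b : ℝ) (H : ℕ) : (WSet a b H).Finite := by
  rw [WSet_eq]
  exact (CopSet_finite _ _ _).union ((CopSet_finite _ _ _).image _)

lemma WSet_ncard (a b : ℝ) (H : ℕ) : (WSet a b H).ncard =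
    (CopSet a b H).ncard + (CopSet (a - Real.pi / 4) (b - Real.pi / 4) H).ncard := by
  rw [WSet_eq, Set.ncard_union_eq ?_ (CopSet_finite _ _ _) ((CopSet_finite _ _ _).image _),
    Set.ncard_image_of_injective _ mulI_inj]
  rw [Set.disjoint_left]
  rintro w ⟨⟨_, ho⟩, _⟩ ⟨v, hv, rfl⟩
  simp only [mulI] at ho
  rw [show v.1 - v.2 + (v.1 + v.2) = 2 * v.1 by ring] at ho
  exact absurd ho (by simp)

lemma WSet_tendsto : ∃ κ : ℝ, 0 < κ ∧ ∀ a b : ℝ, a < b → b - a < Real.pi →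
    Tendsto (fun H : ℕ => ((WSet a b H).ncard : ℝ) / H) atTop (nhds (κ * (b - a))) := by
  obtain ⟨κ, hκ, h⟩ := CopSet_tendsto
  refine ⟨2 * κ, by positivity, fun a b hab hb => ?_⟩
  have h1 := (h a b hab hb).comp tendsto_natCast_atTop_atTop
  have h2 := (h (a - Real.pi / 4) (b - Real.pi / 4) (by linarith) (by linarith)).comp
    tendsto_natCast_atTop_atTop
  convert h1.add h2 using 2
  · simp only [Function.comp]
    rw [WSet_ncard]
    push_cast
    ring
  · ring

lemma inSec_neg {a b x y : ℝ} (hab : a < b) (hb : b - a < Real.pi)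
    (h1 : InSec a b x y) (h2 : InSec a b (-x) (-y)) : x = 0 ∧ y = 0 := by
  obtain ⟨h3, h4⟩ := h1
  obtain ⟨h5, h6⟩ := h2
  have e1 : Real.cos a * y - Real.sin a * x = 0 := by linarith
  have e2 : Real.cos b * y - Real.sin b * x = 0 := by linarith
  have hs : 0 < Real.sin (b - a) := Real.sin_pos_of_pos_of_lt_pi (by linarith) hb
  rw [Real.sin_sub] at hs
  constructor
  · have : (Real.sin b * Real.cos a - Real.cos b * Real.sin a) * x = 0 := by
      linear_combination Real.cos b * e1 - Real.cos a * e2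
    rcases mul_eq_zero.1 this with h | h
    · linarith
    · exact h
  · have : (Real.sin b * Real.cos a - Real.cos b * Real.sin a) * y = 0 := by
      linear_combination Real.sin b * e1 - Real.sin a * e2
    rcases mul_eq_zero.1 this with h | h
    · linarith
    · exact h

lemma pt_eq {m n m' n' : ℤ} (h : IsCoprime m n) (h' : IsCoprime m' n')
    (he : pt (m, n) = pt (m', n')) : (m = m' ∧ n = n') ∨ (m = -m' ∧ n = -n') := by
  have hs := norm_pos_of_coprime h
  have hs' := norm_pos_of_coprime h'
  have hsq : (0:ℚ) < (m:ℚ) ^ 2 + (n:ℚ) ^ 2 := by exact_mod_cast hs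
  have hsq' : (0:ℚ) < (m':ℚ) ^ 2 + (n':ℚ) ^ 2 := by exact_mod_cast hs'
  simp only [pt, Prod.mk.injEq] at he
  rw [div_eq_div_iff hsq.ne' hsq'.ne', div_eq_div_iff hsq.ne' hsq'.ne'] at he
  obtain ⟨e1, e2⟩ := he
  have f1 : (m ^ 2 - n ^ 2) * (m' ^ 2 + n' ^ 2) = (m' ^ 2 - n' ^ 2) * (m ^ 2 + n ^ 2) := by
    exact_mod_cast e1
  have f2 : 2 * m * n * (m' ^ 2 + n' ^ 2) = 2 * m' * n' * (m ^ 2 + n ^ 2) := by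
    exact_mod_cast e2
  have g1 : m ^ 2 * (m' ^ 2 + n' ^ 2) = m' ^ 2 * (m ^ 2 + n ^ 2) := by linarith
  have g2 : n ^ 2 * (m' ^ 2 + n' ^ 2) = n' ^ 2 * (m ^ 2 + n ^ 2) := by linarith
  have d1 : m ^ 2 + n ^ 2 ∣ m' ^ 2 + n' ^ 2 := by
    obtain ⟨u, v, huv⟩ : IsCoprime (m ^ 2) (n ^ 2) := h.pow
    exact ⟨u * m' ^ 2 + v * n' ^ 2,
      by linear_combination (-(m' ^ 2 + n' ^ 2)) * huv + u * g1 + v * g2⟩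
  have d2 : m' ^ 2 + n' ^ 2 ∣ m ^ 2 + n ^ 2 := by
    obtain ⟨u, v, huv⟩ : IsCoprime (m' ^ 2) (n' ^ 2) := h'.pow
    exact ⟨u * m ^ 2 + v * n ^ 2,
      by linear_combination (-(m ^ 2 + n ^ 2)) * huv - u * g1 - v * g2⟩
  have hss : m ^ 2 + n ^ 2 = m' ^ 2 + n' ^ 2 := Int.dvd_antisymm hs.le hs'.le d1 d2
  rw [← hss] at g1 g2 f2
  have k1 := mul_right_cancel₀ hs.ne' g1
  have k2 := mul_right_cancel₀ hs.ne' g2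
  have k3 := mul_right_cancel₀ hs.ne' f2
  have k4 : m * n = m' * n' := by linarith
  rcases sq_eq_sq_iff_eq_or_eq_neg.1 k1 with rfl | rfl
  · by_cases hm : m = 0
    · rcases sq_eq_sq_iff_eq_or_eq_neg.1 k2 with rfl | rfl
      · simp
      · right; simp [hm]
    · exact Or.inl ⟨rfl, mul_left_cancel₀ hm k4⟩
  · by_cases hm : m' = 0
    · rcases sq_eq_sq_iff_eq_or_eq_neg.1 k2 with rfl | rfl
      · left; simp [hm]
      · simp
    · right
      refine ⟨rfl, mul_left_cancel₀ hm (by linarith)⟩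

lemma pt_injOn {a b : ℝ} (hab : a < b) (hb : b - a < Real.pi) (H : ℕ) :
    Set.InjOn pt (WSet a b H) := by
  rintro ⟨m, n⟩ ⟨h1, h2, _⟩ ⟨m', n'⟩ ⟨h1', h2', _⟩ he
  rcases pt_eq h2 h2' he with ⟨rfl, rfl⟩ | ⟨rfl, rfl⟩
  · rfl
  · exfalso
    simp only at h1 h1' h2
    push_cast at h1
    obtain ⟨e1, e2⟩ := inSec_neg hab hb h1' h1
    have e1 : m' = 0 := by exact_mod_cast e1
    have e2 : n' = 0 := by exact_mod_cast e2
    subst e1 e2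
    exact absurd h2' not_isCoprime_zero_zero

/-- polar form, angle in `[a, a + 2π)` -/
lemma polar_form (a x y : ℝ) (h : x ≠ 0 ∨ y ≠ 0) : ∃ r φ : ℝ, 0 < r ∧ a ≤ φ ∧
    φ < a + 2 * Real.pi ∧ x = r * Real.cos φ ∧ y = r * Real.sin φ := by
  set z : ℂ := ⟨x, y⟩ with hz
  have hz0 : z ≠ 0 := by
    intro h0
    have e1 := congrArg Complex.re h0
    have e2 := congrArg Complex.im h0
    simp [hz] at e1 e2
    tauto
  refine ⟨‖z‖, toIcoMod Real.two_pi_pos a z.arg, norm_pos_iff.2 hz0,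
    (toIcoMod_mem_Ico _ _ _).1, (toIcoMod_mem_Ico _ _ _).2, ?_, ?_⟩
  · rw [toIcoMod, zsmul_eq_mul, Real.cos_sub_int_mul_two_pi, Complex.norm_mul_cos_arg]
  · rw [toIcoMod, zsmul_eq_mul, Real.sin_sub_int_mul_two_pi, Complex.norm_mul_sin_arg]

/-- points of bounded height on an arc -/
def NSet (θ₁ θ₂ : ℝ) (H : ℕ) : Set (ℚ × ℚ) :=
  {pq : ℚ × ℚ |
            (∃ t : ℝ, θ₁ ≤ t ∧ t ≤ θ₂ ∧
              (pq.1 : ℝ) = Real.cos t ∧ (pq.2 : ℝ) = Real.sin t) ∧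
            height pq.1 pq.2 ≤ H}

lemma pt_polar {m n : ℤ} {r φ : ℝ} (hr : r ≠ 0) (h1 : (m:ℝ) = r * Real.cos φ)
    (h2 : (n:ℝ) = r * Real.sin φ) :
    ((pt (m, n)).1 : ℝ) = Real.cos (2 * φ) ∧ ((pt (m, n)).2 : ℝ) = Real.sin (2 * φ) := by
  have hsc := Real.sin_sq_add_cos_sq φ
  have e : (m:ℝ) ^ 2 + (n:ℝ) ^ 2 = r ^ 2 := by
    rw [h1, h2]; linear_combination r ^ 2 * hsc
  have hr2 : r ^ 2 ≠ 0 := pow_ne_zero 2 hr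
  simp only [pt]
  push_cast
  rw [e, div_eq_iff hr2, div_eq_iff hr2, h1, h2, Real.cos_two_mul, Real.sin_two_mul]
  constructor
  · linear_combination (-r ^ 2) * hsc
  · ring

/-- every rational direction is spanned by a coprime integral vector -/
lemma coprime_dir (x y : ℚ) (h : x ≠ 0 ∨ y ≠ 0) :
    ∃ (m n : ℤ) (c : ℚ), IsCoprime m n ∧ c ≠ 0 ∧ x = c * m ∧ y = c * n := by
  set u : ℤ := x.num * y.den with hu
  set v : ℤ := y.num * x.den with hv
  have hx : (x.den : ℚ) ≠ 0 := by exact_mod_cast x.den_nz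
  have hy : (y.den : ℚ) ≠ 0 := by exact_mod_cast y.den_nz
  have ex : x * x.den = x.num := Rat.mul_den_eq_num x
  have ey : y * y.den = y.num := Rat.mul_den_eq_num y
  have hg : Int.gcd u v ≠ 0 := by
    intro hg
    rw [Int.gcd_eq_zero_iff] at hg
    rcases h with h | h
    · exact (mul_ne_zero (Rat.num_ne_zero.2 h) (by exact_mod_cast y.den_nz)) hg.1
    · exact (mul_ne_zero (Rat.num_ne_zero.2 h) (by exact_mod_cast x.den_nz)) hg.2
  obtain ⟨m, n, hc, hm, hn⟩ := Int.exists_gcd_one (Nat.pos_of_ne_zero hg)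
  have hgq : ((Int.gcd u v : ℕ) : ℚ) ≠ 0 := by exact_mod_cast hg
  refine ⟨m, n, (Int.gcd u v : ℕ) / (x.den * y.den), Int.isCoprime_iff_gcd_eq_one.2 hc,
    div_ne_zero hgq (mul_ne_zero hx hy), ?_, ?_⟩
  · have := congrArg (Int.cast : ℤ → ℚ) hm
    rw [hu] at this
    push_cast at this
    rw [div_mul_eq_mul_div, eq_div_iff (mul_ne_zero hx hy), mul_comm _ (m:ℚ), ← this, ← ex]
    ring
  · have := congrArg (Int.cast : ℤ → ℚ) hn
    rw [hv] at this
    push_cast at this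
    rw [div_mul_eq_mul_div, eq_div_iff (mul_ne_zero hx hy), mul_comm _ (n:ℚ), ← this, ← ey]
    ring

lemma exists_coprime_half (p q : ℚ) (t : ℝ) (hp : (p:ℝ) = Real.cos t) (hq : (q:ℝ) = Real.sin t) :
    ∃ (m n : ℤ) (r : ℝ), IsCoprime m n ∧ 0 < r ∧ (m:ℝ) = r * Real.cos (t / 2) ∧
      (n:ℝ) = r * Real.sin (t / 2) := by
  suffices hmain : ∃ (m n : ℤ) (r : ℝ), IsCoprime m n ∧ r ≠ 0 ∧ (m:ℝ) = r * Real.cos (t / 2) ∧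
      (n:ℝ) = r * Real.sin (t / 2) by
    obtain ⟨m, n, r, h1, h2, h3, h4⟩ := hmain
    rcases lt_or_gt_of_ne h2 with h | h
    · exact ⟨-m, -n, -r, h1.neg_neg, by linarith, by push_cast; rw [h3]; ring,
        by push_cast; rw [h4]; ring⟩
    · exact ⟨m, n, r, h1, h, h3, h4⟩
  have hsc := Real.sin_sq_add_cos_sq (t / 2)
  have ec : Real.cos t = 2 * Real.cos (t / 2) ^ 2 - 1 := by
    rw [← Real.cos_two_mul]; ring_nf
  have es : Real.sin t = 2 * Real.sin (t / 2) * Real.cos (t / 2) := by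
    rw [← Real.sin_two_mul]; ring_nf
  by_cases hc : Real.cos (t / 2) = 0
  · have hs : Real.sin (t / 2) ^ 2 = 1 := by rw [hc] at hsc; linarith
    have hs0 : Real.sin (t / 2) ≠ 0 := by
      intro h
      rw [h] at hs
      norm_num at hs
    refine ⟨0, 1, Real.sin (t / 2), isCoprime_zero_left.2 isUnit_one, hs0, ?_, ?_⟩
    · rw [hc]; simp
    · rw [← sq, hs]; simp
  · have h1p : (1 + p : ℚ) ≠ 0 := by
      intro h
      have : (1:ℝ) + p = 0 := by exact_mod_cast h
      rw [hp, ec] at this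
      have : Real.cos (t / 2) ^ 2 = 0 := by linarith
      exact hc (pow_eq_zero_iff two_ne_zero |>.1 this)
    obtain ⟨m, n, c, hcop, hc0, e1, e2⟩ := coprime_dir (1 + p) q (Or.inl h1p)
    have hcr : (c:ℝ) ≠ 0 := by exact_mod_cast hc0
    have e1' : (1:ℝ) + p = c * m := by exact_mod_cast e1
    have e2' : (q:ℝ) = c * n := by exact_mod_cast e2
    refine ⟨m, n, 2 * Real.cos (t / 2) / c, hcop, by positivity, ?_, ?_⟩
    · rw [hp, ec] at e1'
      field_simp
      linarith
    · rw [hq, es] at e2'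
      field_simp
      linarith

lemma NSet_eq {θ₁ θ₂ : ℝ} (h1 : θ₁ < θ₂) (h2 : θ₂ - θ₁ < 2 * Real.pi) (H : ℕ) :
    NSet θ₁ θ₂ H = pt '' WSet (θ₁ / 2) (θ₂ / 2) H := by
  have hab : θ₁ / 2 < θ₂ / 2 := by linarith
  have hb : θ₂ / 2 - θ₁ / 2 < Real.pi := by linarith
  have hpi := Real.pi_pos
  ext ⟨p, q⟩
  constructor
  · rintro ⟨⟨t, ht1, ht2, hp, hq⟩, hh⟩
    simp only at hp hq hh
    obtain ⟨m, n, r, hc, hr, hm, hn⟩ := exists_coprime_half p q t hp hq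
    obtain ⟨e1, e2⟩ := pt_polar hr.ne' hm hn
    rw [mul_div_cancel₀ _ two_ne_zero, ← hp] at e1
    rw [mul_div_cancel₀ _ two_ne_zero, ← hq] at e2
    have e1 : (pt (m, n)).1 = p := by exact_mod_cast e1
    have e2 : (pt (m, n)).2 = q := by exact_mod_cast e2
    refine ⟨(m, n), ⟨?_, hc, ?_⟩, Prod.ext e1 e2⟩
    · simp only [hm, hn]
      rw [inSec_smul hr, inSec_trig_Ico hab hb (by linarith) (by linarith)]
      linarith
    · rw [← e1, ← e2] at hh
      exact (height_pt hc H).1 hh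
  · rintro ⟨⟨m, n⟩, ⟨hs, hc, hh⟩, he⟩
    rw [← he]
    simp only at hs hc hh
    have hne : (m:ℝ) ≠ 0 ∨ (n:ℝ) ≠ 0 := by
      by_contra hcon
      push Not at hcon
      have e1 : m = 0 := by exact_mod_cast hcon.1
      have e2 : n = 0 := by exact_mod_cast hcon.2
      subst e1 e2
      exact not_isCoprime_zero_zero hc
    obtain ⟨r, φ, hr, hφ1, hφ2, hm, hn⟩ := polar_form (θ₁ / 2) m n hne
    rw [hm, hn, inSec_smul hr, inSec_trig_Ico hab hb hφ1 hφ2] at hs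
    obtain ⟨e1, e2⟩ := pt_polar hr.ne' hm hn
    exact ⟨⟨2 * φ, by linarith, by linarith, e1, e2⟩, (height_pt hc H).2 hh⟩

lemma NSet_finite {θ₁ θ₂ : ℝ} (h1 : θ₁ < θ₂) (h2 : θ₂ - θ₁ < 2 * Real.pi) (H : ℕ) :
    (NSet θ₁ θ₂ H).Finite := by
  rw [NSet_eq h1 h2]
  exact (WSet_finite _ _ _).image _

lemma NSet_tendsto : ∃ κ : ℝ, 0 < κ ∧ ∀ θ₁ θ₂ : ℝ, θ₁ < θ₂ → θ₂ - θ₁ < 2 * Real.pi →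
    Tendsto (fun H : ℕ => ((NSet θ₁ θ₂ H).ncard : ℝ) / H) atTop (nhds (κ * (θ₂ - θ₁))) := by
  obtain ⟨κ, hκ, h⟩ := WSet_tendsto
  refine ⟨κ / 2, by positivity, fun θ₁ θ₂ h1 h2 => ?_⟩
  have := h (θ₁ / 2) (θ₂ / 2) (by linarith) (by linarith)
  convert this using 2
  · rw [NSet_eq h1 h2, Set.InjOn.ncard_image (pt_injOn (by linarith) (by linarith) _)]
  · ring

/-- all points of bounded height -/
def TSet (H : ℕ) : Set (ℚ × ℚ) :=
  {pq : ℚ × ℚ | pq.1 ^ 2 + pq.2 ^ 2 = 1 ∧ height pq.1 pq.2 ≤ H}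

lemma circle_param (θ : ℝ) {p q : ℚ} (h : p ^ 2 + q ^ 2 = 1) :
    ∃ t : ℝ, θ ≤ t ∧ t < θ + 2 * Real.pi ∧ (p : ℝ) = Real.cos t ∧ (q : ℝ) = Real.sin t := by
  have hr : (p:ℝ) ^ 2 + (q:ℝ) ^ 2 = 1 := by exact_mod_cast h
  have hne : (p:ℝ) ≠ 0 ∨ (q:ℝ) ≠ 0 := by
    by_contra hcon
    push Not at hcon
    rw [hcon.1, hcon.2] at hr
    norm_num at hr
  obtain ⟨r, t, h0, h1, h2, h3, h4⟩ := polar_form θ p q hne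
  have : r ^ 2 = 1 := by
    rw [h3, h4] at hr
    have hsc := Real.sin_sq_add_cos_sq t
    linear_combination hr - r ^ 2 * hsc
  have hr1 : r = 1 := by nlinarith
  subst hr1
  exact ⟨t, h1, h2, by simpa using h3, by simpa using h4⟩

lemma circle_of_param {p q : ℚ} {t : ℝ} (h3 : (p : ℝ) = Real.cos t) (h4 : (q : ℝ) = Real.sin t) :
    p ^ 2 + q ^ 2 = 1 := by
  have : (p:ℝ) ^ 2 + (q:ℝ) ^ 2 = 1 := by
    rw [h3, h4]
    exact Real.cos_sq_add_sin_sq t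
  exact_mod_cast this

lemma TSet_eq (H : ℕ) : TSet H = NSet 0 Real.pi H ∪ NSet Real.pi (2 * Real.pi) H := by
  ext ⟨p, q⟩
  constructor
  · rintro ⟨h1, h2⟩
    obtain ⟨t, a1, a2, a3, a4⟩ := circle_param 0 h1
    rcases le_total t Real.pi with h | h
    · exact Or.inl ⟨⟨t, a1, h, a3, a4⟩, h2⟩
    · exact Or.inr ⟨⟨t, h, by linarith, a3, a4⟩, h2⟩
  · rintro (⟨⟨t, _, _, a3, a4⟩, h2⟩ | ⟨⟨t, _, _, a3, a4⟩, h2⟩)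
    · exact ⟨circle_of_param a3 a4, h2⟩
    · exact ⟨circle_of_param a3 a4, h2⟩

lemma inter_le (H : ℕ) : (NSet 0 Real.pi H ∩ NSet Real.pi (2 * Real.pi) H).ncard ≤ 2 := by
  have hsub : NSet 0 Real.pi H ∩ NSet Real.pi (2 * Real.pi) H ⊆ {(1, 0), (-1, 0)} := by
    rintro ⟨p, q⟩ ⟨⟨⟨t, a1, a2, a3, a4⟩, _⟩, ⟨⟨s, b1, b2, b3, b4⟩, _⟩⟩
    simp only at a3 a4 b3 b4
    have hq1 : (0:ℝ) ≤ q := by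
      rw [a4]
      exact Real.sin_nonneg_of_nonneg_of_le_pi a1 a2
    have hq2 : (q:ℝ) ≤ 0 := by
      rw [b4, ← Real.sin_sub_two_pi]
      exact Real.sin_nonpos_of_nonpos_of_neg_pi_le (by linarith) (by linarith)
    have hq : q = 0 := by exact_mod_cast le_antisymm hq2 hq1
    have hc := circle_of_param a3 a4
    subst hq
    have : p = 1 ∨ p = -1 := by
      have hc2 : p ^ 2 = 1 := by simpa using hc
      exact sq_eq_one_iff.1 hc2
    rcases this with rfl | rfl <;> simp
  refine (Set.ncard_le_ncard hsub (by simp)).trans ?_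
  exact (Set.ncard_insert_le _ _).trans (by simp)

lemma TSet_tendsto {κ : ℝ} (h : ∀ θ₁ θ₂ : ℝ, θ₁ < θ₂ → θ₂ - θ₁ < 2 * Real.pi →
    Tendsto (fun H : ℕ => ((NSet θ₁ θ₂ H).ncard : ℝ) / H) atTop (nhds (κ * (θ₂ - θ₁)))) :
    Tendsto (fun H : ℕ => ((TSet H).ncard : ℝ) / H) atTop (nhds (κ * (2 * Real.pi))) := by
  have hpi := Real.pi_pos
  have h1 := h 0 Real.pi (by linarith) (by linarith)
  have h2 := h Real.pi (2 * Real.pi) (by linarith) (by linarith)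
  have h3 : Tendsto (fun H : ℕ =>
      ((NSet 0 Real.pi H ∩ NSet Real.pi (2 * Real.pi) H).ncard : ℝ) / H) atTop (nhds 0) := by
    refine squeeze_zero (fun H => by positivity) (fun H => ?_)
      (tendsto_const_div_atTop_nhds_zero_nat 2)
    have : ((NSet 0 Real.pi H ∩ NSet Real.pi (2 * Real.pi) H).ncard : ℝ) ≤ 2 := by
      exact_mod_cast inter_le H
    gcongr
  convert (h1.add h2).sub h3 using 2
  · rename_i H
    have := Set.ncard_union_add_ncard_inter (NSet 0 Real.pi H) (NSet Real.pi (2 * Real.pi) H)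
      (NSet_finite (by linarith) (by linarith) H) (NSet_finite (by linarith) (by linarith) H)
    rw [← TSet_eq] at this
    have : ((TSet H).ncard : ℝ) + ((NSet 0 Real.pi H ∩ NSet Real.pi (2 * Real.pi) H).ncard : ℝ)
      = (NSet 0 Real.pi H).ncard + (NSet Real.pi (2 * Real.pi) H).ncard := by exact_mod_cast this
    rw [← add_div, ← sub_div, ← this, add_sub_cancel_right]
  · ring

/-- **Rational points are equidistributed on the unit circle** : for every arc
`A = {(cos t, sin t) : θ₁ ≤ t ≤ θ₂}` with `0 < θ₂ − θ₁ ≤ 2π`,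
`lim_{H→∞} |{(p,q) ∈ A ∩ ℚ² : h(p,q) ≤ H}| / |{(p,q) ∈ S¹ ∩ ℚ² : h(p,q) ≤ H}|
  = (θ₂−θ₁)/(2π) = length(A)/(2π)`. -/
theorem rational_points_equidistributed (θ₁ θ₂ : ℝ)
    (h₁ : 0 < θ₂ - θ₁) (h₂ : θ₂ - θ₁ ≤ 2 * Real.pi) :
    Tendsto
      (fun H : ℕ =>
        (({pq : ℚ × ℚ |
            (∃ t : ℝ, θ₁ ≤ t ∧ t ≤ θ₂ ∧
              (pq.1 : ℝ) = Real.cos t ∧ (pq.2 : ℝ) = Real.sin t) ∧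
            height pq.1 pq.2 ≤ H}.ncard : ℝ) /
          ({pq : ℚ × ℚ | pq.1 ^ 2 + pq.2 ^ 2 = 1 ∧ height pq.1 pq.2 ≤ H}.ncard : ℝ)))
      atTop (nhds ((θ₂ - θ₁) / (2 * Real.pi))) := by
  change Tendsto (fun H : ℕ => ((NSet θ₁ θ₂ H).ncard : ℝ) / ((TSet H).ncard : ℝ)) atTop _
  obtain ⟨κ, hκ, h⟩ := NSet_tendsto
  have hT := TSet_tendsto h
  have hpi := Real.pi_pos
  have hN : Tendsto (fun H : ℕ => ((NSet θ₁ θ₂ H).ncard : ℝ) / H) atTop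
      (nhds (κ * (θ₂ - θ₁))) := by
    rcases lt_or_eq_of_le h₂ with hlt | heq
    · exact h θ₁ θ₂ (by linarith) hlt
    · rw [heq]
      refine hT.congr fun H => ?_
      have : NSet θ₁ θ₂ H = TSet H := by
        ext ⟨p, q⟩
        constructor
        · rintro ⟨⟨t, _, _, a3, a4⟩, hh⟩
          exact ⟨circle_of_param a3 a4, hh⟩
        · rintro ⟨hc, hh⟩
          obtain ⟨t, a1, a2, a3, a4⟩ := circle_param θ₁ hc
          exact ⟨⟨t, a1, by linarith, a3, a4⟩, hh⟩
      rw [this]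
  have hdiv := hN.div hT (by positivity)
  rw [mul_div_mul_left _ _ hκ.ne'] at hdiv
  refine hdiv.congr' ?_
  filter_upwards [eventually_gt_atTop 0] with H hH
  have : (H:ℝ) ≠ 0 := by exact_mod_cast hH.ne'
  simp only [Pi.div_apply]
  rw [div_div_div_cancel_right₀ this]
end

section
/- Let S¹_ℚ(odd) be the set of rational points (p,q) on the unit circle with p ≠ 0 and q ≠ 0 such that, writing |p| = x/z in lowest terms, the numerator x is odd. For each such point let θ(p,q) ∈ [0, 2π) be its angle, so (p,q) = (cos θ(p,q), sin θ(p,q)). Then for any 0 ≤ θ₁ < θ₂ ≤ 2π, lim_{H→∞} (1/H)·|{(p,q) ∈ S¹_ℚ(odd) : θ₁ ≤ θ(p,q) < θ₂, h(p,q) ≤ H}| = (θ₂−θ₁)/π². -/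
open Filter

lemma rp_covol : ZLattice.covolume (Submodule.span ℤ (Set.range (Pi.basisFun ℝ (Fin 2)))) = 1 := by
  rw [ZLattice.covolume_eq_measure_fundamentalDomain _ _ (ZSpan.isAddFundamentalDomain (Pi.basisFun ℝ (Fin 2)) MeasureTheory.volume)]
  simp [MeasureTheory.measureReal_def]
  rw [Matrix.det_fin_two]
  simp

lemma rp_count_cone (X : Set (ℝ × ℝ)) (hconv : Convex ℝ X) (hmeas : MeasurableSet X)
    (hcone : ∀ v ∈ X, ∀ r : ℝ, 0 < r → r • v ∈ X) (κ : ℝ) (hκ : 0 < κ) :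
    Tendsto (fun c : ℝ => ({z : ℤ × ℤ | ((z.1 : ℝ), (z.2 : ℝ)) ∈ X ∧
        κ * ((z.1 : ℝ) ^ 2 + (z.2 : ℝ) ^ 2) ≤ c}.ncard : ℝ) / c) atTop
      (nhds (MeasureTheory.volume.real {v : ℝ × ℝ | v ∈ X ∧ κ * (v.1 ^ 2 + v.2 ^ 2) ≤ 1})) := by
  let φ : (Fin 2 → ℝ) → ℝ × ℝ := fun w => (w 0, w 1)
  have hφm : MeasureTheory.MeasurePreserving φ := MeasureTheory.volume_preserving_finTwoArrow ℝ
  have hmS : MeasurableSet {v : ℝ × ℝ | v ∈ X ∧ κ * (v.1 ^ 2 + v.2 ^ 2) ≤ 1} := by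
    have h : MeasurableSet {v : ℝ × ℝ | κ * (v.1 ^ 2 + v.2 ^ 2) ≤ 1} :=
      measurableSet_le (by fun_prop) (by fun_prop)
    exact hmeas.inter h
  have hq : Convex ℝ {w : Fin 2 → ℝ | κ * (w 0 ^ 2 + w 1 ^ 2) ≤ 1} := by
    intro x hx y hy s t hs ht hst
    simp only [Set.mem_ofPred_eq, Pi.add_apply, Pi.smul_apply, smul_eq_mul] at *
    have h1 : (s * x 0 + t * y 0) ^ 2 + (s * x 1 + t * y 1) ^ 2 ≤ s * (x 0 ^ 2 + x 1 ^ 2) + t * (y 0 ^ 2 + y 1 ^ 2) := by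
      obtain rfl : t = 1 - s := by linarith
      nlinarith [mul_nonneg (mul_nonneg hs ht) (sq_nonneg (x 0 - y 0)), mul_nonneg (mul_nonneg hs ht) (sq_nonneg (x 1 - y 1))]
    calc _ ≤ κ * (s * (x 0 ^ 2 + x 1 ^ 2) + t * (y 0 ^ 2 + y 1 ^ 2)) := by gcongr
      _ = s * (κ * (x 0 ^ 2 + x 1 ^ 2)) + t * (κ * (y 0 ^ 2 + y 1 ^ 2)) := by ring
      _ ≤ s * 1 + t * 1 := by gcongr
      _ = 1 := by linarith
  have hX' : Convex ℝ (φ ⁻¹' X) := by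
    intro x hx y hy s t hs ht hst
    exact hconv hx hy hs ht hst
  have key := ZLattice.covolume.tendsto_card_le_div (ι := Fin 2)
    (Submodule.span ℤ (Set.range (Pi.basisFun ℝ (Fin 2)))) (X := φ ⁻¹' X)
    (F := fun w => κ * (w 0 ^ 2 + w 1 ^ 2)) (fun x r hx hr => hcone _ hx r hr)
    (fun x r hr => by simp; ring) ?_ (hφm.measurable hmS) ((hX'.inter hq).addHaar_frontier _)
  · rw [rp_covol, div_one] at key
    have hv : MeasureTheory.volume.real {x : Fin 2 → ℝ | x ∈ φ ⁻¹' X ∧ κ * (x 0 ^ 2 + x 1 ^ 2) ≤ 1} =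
        MeasureTheory.volume.real {v : ℝ × ℝ | v ∈ X ∧ κ * (v.1 ^ 2 + v.2 ^ 2) ≤ 1} := by
      rw [← hφm.measureReal_preimage hmS.nullMeasurableSet]; rfl
    rw [hv] at key
    refine key.congr fun c => ?_
    congr 2
    rw [Nat.card_coe_set_eq]
    let ψ : ℤ × ℤ → (Fin 2 → ℝ) := fun z => ![(z.1 : ℝ), (z.2 : ℝ)]
    have hψ : Function.Injective ψ := by
      intro z z' h
      have h0 := congrFun h 0
      have h1 := congrFun h 1
      simp [ψ] at h0 h1
      exact Prod.ext h0 h1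
    rw [← Set.ncard_image_of_injective _ hψ]
    congr 1
    ext w
    simp only [Set.mem_inter_iff, Set.mem_ofPred_eq, SetLike.mem_coe, Set.mem_image, Module.Basis.mem_span_iff_repr_mem, Pi.basisFun_repr]
    constructor
    · rintro ⟨⟨h1, h2⟩, h3⟩
      obtain ⟨m, hm⟩ := h3 0
      obtain ⟨n, hn⟩ := h3 1
      simp at hm hn
      have : ψ (m, n) = w := by ext i; fin_cases i <;> simp [ψ, hm, hn]
      refine ⟨(m, n), ⟨?_, ?_⟩, this⟩
      · simpa [hm, hn, φ] using h1
      · simpa [hm, hn] using h2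
    · rintro ⟨z, ⟨h1, h2⟩, rfl⟩
      refine ⟨⟨by simpa [φ, ψ] using h1, by simpa [ψ] using h2⟩, ?_⟩
      intro i; fin_cases i <;> simp [ψ]
  · rw [isBounded_iff_forall_norm_le]
    refine ⟨1 + κ⁻¹, ?_⟩
    rintro w ⟨-, hw⟩
    have hpos : 0 < κ⁻¹ := inv_pos.2 hκ
    rw [pi_norm_le_iff_of_nonneg (by positivity)]
    have h2 : w 0 ^ 2 + w 1 ^ 2 ≤ κ⁻¹ := by
      rw [← one_div, le_div_iff₀ hκ]; linarith
    intro i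
    rw [Real.norm_eq_abs]
    apply abs_le_of_sq_le_sq _ (by positivity)
    fin_cases i
    · simp; nlinarith [sq_nonneg (w 0), sq_nonneg (w 1)]
    · simp; nlinarith [sq_nonneg (w 0), sq_nonneg (w 1)]
/-- The open-ish cone of angles in `[a, b)` inside the upper half plane. -/
def rpCone (a b : ℝ) : Set (ℝ × ℝ) :=
  {v | 0 < v.2 ∧ 0 ≤ Real.cos a * v.2 - Real.sin a * v.1 ∧ 0 < Real.sin b * v.1 - Real.cos b * v.2}

lemma rp_cone_convex (a b : ℝ) : Convex ℝ (rpCone a b) := by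
  rintro x ⟨x1, x2, x3⟩ y ⟨y1, y2, y3⟩ s t hs ht hst
  have hp : 0 < s ∨ 0 < t := by
    by_contra! h
    linarith
  simp only [rpCone, Set.mem_ofPred_eq, Prod.fst_add, Prod.snd_add, Prod.smul_fst, Prod.smul_snd, smul_eq_mul]
  have aux : ∀ p q : ℝ, 0 < p → 0 < q → 0 < s * p + t * q := by
    intro p q h1 h2
    rcases hp with h | h
    · have := mul_pos h h1; have := mul_nonneg ht h2.le; linarith
    · have := mul_pos h h2; have := mul_nonneg hs h1.le; linarith
  refine ⟨aux _ _ x1 y1, ?_, ?_⟩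
  · have := add_nonneg (mul_nonneg hs x2) (mul_nonneg ht y2); linarith
  · have := aux _ _ x3 y3; linarith

lemma rp_cone_meas (a b : ℝ) : MeasurableSet (rpCone a b) := by
  have h1 : MeasurableSet {v : ℝ × ℝ | 0 < v.2} := measurableSet_lt (by fun_prop) (by fun_prop)
  have h2 : MeasurableSet {v : ℝ × ℝ | 0 ≤ Real.cos a * v.2 - Real.sin a * v.1} :=
    measurableSet_le (by fun_prop) (by fun_prop)
  have h3 : MeasurableSet {v : ℝ × ℝ | 0 < Real.sin b * v.1 - Real.cos b * v.2} :=
    measurableSet_lt (by fun_prop) (by fun_prop)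
  exact h1.inter (h2.inter h3)

lemma rp_cone_smul (a b : ℝ) (v : ℝ × ℝ) (r : ℝ) (hr : 0 < r) : r • v ∈ rpCone a b ↔ v ∈ rpCone a b := by
  simp only [rpCone, Set.mem_ofPred_eq, Prod.smul_fst, Prod.smul_snd, smul_eq_mul]
  rw [show Real.cos a * (r * v.2) - Real.sin a * (r * v.1) = r * (Real.cos a * v.2 - Real.sin a * v.1) by ring,
    show Real.sin b * (r * v.1) - Real.cos b * (r * v.2) = r * (Real.sin b * v.1 - Real.cos b * v.2) by ring]
  rw [mul_pos_iff_of_pos_left hr, mul_pos_iff_of_pos_left hr, mul_nonneg_iff_of_pos_left hr]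

/-- Membership in polar coordinates. -/
lemma rp_cone_polar (a b : ℝ) (ha : 0 ≤ a) (hab : a < b) (hb : b ≤ Real.pi) (t r : ℝ)
    (ht : -Real.pi < t) (ht' : t < Real.pi) (hr : 0 < r) :
    (r * Real.cos t, r * Real.sin t) ∈ rpCone a b ↔ 0 < t ∧ a ≤ t ∧ t < b := by
  rw [show (r * Real.cos t, r * Real.sin t) = r • (Real.cos t, Real.sin t) by simp, rp_cone_smul _ _ _ _ hr]
  simp only [rpCone, Set.mem_ofPred_eq]
  rw [show Real.cos a * Real.sin t - Real.sin a * Real.cos t = Real.sin (t - a) by rw [Real.sin_sub]; ring,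
    ← Real.sin_sub]
  constructor
  · rintro ⟨h1, h2, h3⟩
    have t0 : 0 < t := by
      by_contra! h
      linarith [Real.sin_nonpos_of_nonpos_of_neg_pi_le h ht.le]
    refine ⟨t0, ?_, ?_⟩
    · by_contra! h
      linarith [Real.sin_neg_of_neg_of_neg_pi_lt (x := t - a) (by linarith) (by linarith)]
    · by_contra! h
      linarith [Real.sin_nonpos_of_nonpos_of_neg_pi_le (x := b - t) (by linarith) (by linarith)]
  · rintro ⟨h1, h2, h3⟩
    exact ⟨Real.sin_pos_of_pos_of_lt_pi h1 ht', Real.sin_nonneg_of_nonneg_of_le_pi (by linarith) (by linarith),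
      Real.sin_pos_of_pos_of_lt_pi (by linarith) (by linarith)⟩

lemma rp_sector_meas (a b : ℝ) : MeasurableSet {v : ℝ × ℝ | v ∈ rpCone a b ∧ 1 * (v.1 ^ 2 + v.2 ^ 2) ≤ 1} := by
  have h : MeasurableSet {v : ℝ × ℝ | 1 * (v.1 ^ 2 + v.2 ^ 2) ≤ 1} :=
    measurableSet_le (by fun_prop) (by fun_prop)
  exact (rp_cone_meas a b).inter h

lemma rp_sector_vol (a b : ℝ) (ha : 0 ≤ a) (hab : a < b) (hb : b ≤ Real.pi) :
    MeasureTheory.volume.real {v : ℝ × ℝ | v ∈ rpCone a b ∧ 1 * (v.1 ^ 2 + v.2 ^ 2) ≤ 1} = (b - a) / 2 := by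
  have hm := rp_sector_meas a b
  set S := {v : ℝ × ℝ | v ∈ rpCone a b ∧ 1 * (v.1 ^ 2 + v.2 ^ 2) ≤ 1} with hS
  rw [← MeasureTheory.integral_indicator_one hm, ← integral_comp_polarCoord_symm]
  have h1 : ∀ p ∈ polarCoord.target, p.1 • S.indicator (1 : ℝ × ℝ → ℝ) (polarCoord.symm p) =
      (Set.Ioc (0:ℝ) 1 ×ˢ (Set.Ioi (0:ℝ) ∩ Set.Ico a b)).indicator (fun p : ℝ × ℝ => p.1 * 1) p := by
    rintro ⟨r, t⟩ ⟨hr, ht1, ht2⟩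
    simp only [Set.mem_Ioi] at hr
    dsimp only at ht1 ht2
    have hmem : (polarCoord.symm (r, t)) ∈ S ↔ (r, t) ∈ Set.Ioc (0:ℝ) 1 ×ˢ (Set.Ioi (0:ℝ) ∩ Set.Ico a b) := by
      rw [polarCoord_symm_apply, hS]
      simp only [Set.mem_ofPred_eq, Set.mem_prod, Set.mem_inter_iff, Set.mem_Ioc, Set.mem_Ico, Set.mem_Ioi]
      rw [rp_cone_polar a b ha hab hb t r ht1 ht2 hr]
      have : 1 * ((r * Real.cos t) ^ 2 + (r * Real.sin t) ^ 2) = r ^ 2 := by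
        linear_combination r ^ 2 * Real.sin_sq_add_cos_sq t
      rw [this]
      have : r ^ 2 ≤ 1 ↔ r ≤ 1 := by
        rw [sq_le_one_iff₀ hr.le]
      rw [this]
      tauto
    by_cases h : (polarCoord.symm (r, t)) ∈ S
    · rw [Set.indicator_of_mem h, Set.indicator_of_mem (hmem.1 h)]; simp
    · rw [Set.indicator_of_notMem h, Set.indicator_of_notMem (fun h' => h (hmem.2 h'))]; simp
  rw [MeasureTheory.setIntegral_congr_fun polarCoord.open_target.measurableSet h1]
  have hM : MeasurableSet (Set.Ioc (0:ℝ) 1 ×ˢ (Set.Ioi (0:ℝ) ∩ Set.Ico a b)) := by measurability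
  rw [MeasureTheory.setIntegral_indicator hM]
  have : polarCoord.target ∩ Set.Ioc (0:ℝ) 1 ×ˢ (Set.Ioi (0:ℝ) ∩ Set.Ico a b) = Set.Ioc (0:ℝ) 1 ×ˢ (Set.Ioi (0:ℝ) ∩ Set.Ico a b) := by
    apply Set.inter_eq_right.2
    rintro ⟨r, t⟩ ⟨⟨h1, h2⟩, h3, h4, h5⟩
    simp only [Set.mem_Ioi] at h3
    dsimp only at h1 h4 h5
    exact ⟨h1, by dsimp only; linarith [Real.pi_pos], by dsimp only; linarith⟩
  rw [this, MeasureTheory.Measure.volume_eq_prod,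
    MeasureTheory.setIntegral_prod_mul (fun x : ℝ => x) (fun _ => (1:ℝ))]
  rw [← intervalIntegral.integral_of_le zero_le_one]
  have hae : (Set.Ioi (0:ℝ) ∩ Set.Ico a b : Set ℝ) =ᵐ[MeasureTheory.volume] Set.Ico a b := by
    have h2 : (Set.Ioi (0:ℝ)) =ᵐ[MeasureTheory.volume] Set.Ici 0 := MeasureTheory.Ioi_ae_eq_Ici
    have h3 := h2.inter (Filter.EventuallyEq.refl _ (Set.Ico a b))
    have h4 : Set.Ici (0:ℝ) ∩ Set.Ico a b = Set.Ico a b := by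
      apply Set.inter_eq_right.2
      intro x hx; exact ha.trans hx.1
    rwa [h4] at h3
  rw [MeasureTheory.setIntegral_congr_set hae]
  simp [hab.le]
  ring

/-- Volume for the index-two sublattice. -/
lemma rp_sector_vol' (a b : ℝ) (ha : 0 ≤ a) (hab : a < b) (hb : b ≤ Real.pi) :
    MeasureTheory.volume.real {v : ℝ × ℝ | v ∈ {v : ℝ × ℝ | (v.1 - v.2, v.1 + v.2) ∈ rpCone a b} ∧ 2 * (v.1 ^ 2 + v.2 ^ 2) ≤ 1} = (b - a) / 4 := by
  let f : ℝ × ℝ →ₗ[ℝ] ℝ × ℝ := Matrix.toLin (.finTwoProd ℝ) (.finTwoProd ℝ) !![1, -1; 1, 1]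
  have hdet : LinearMap.det f = 2 := by
    simp [f, LinearMap.det_toLin, Matrix.det_fin_two_of]; norm_num
  have hf : ∀ v, f v = (v.1 - v.2, v.1 + v.2) := by
    intro v
    simp [f, Matrix.toLin_finTwoProd_apply]; ring
  have : {v : ℝ × ℝ | v ∈ {v : ℝ × ℝ | (v.1 - v.2, v.1 + v.2) ∈ rpCone a b} ∧ 2 * (v.1 ^ 2 + v.2 ^ 2) ≤ 1} =
      f ⁻¹' {v : ℝ × ℝ | v ∈ rpCone a b ∧ 1 * (v.1 ^ 2 + v.2 ^ 2) ≤ 1} := by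
    ext v
    simp only [Set.mem_ofPred_eq, Set.mem_preimage, hf]
    rw [show 2 * (v.1 ^ 2 + v.2 ^ 2) = 1 * ((v.1 - v.2) ^ 2 + (v.1 + v.2) ^ 2) by ring]
  rw [this, MeasureTheory.measureReal_def, MeasureTheory.Measure.addHaar_preimage_linearMap _ (by rw [hdet]; norm_num), ENNReal.toReal_mul,
    ← MeasureTheory.measureReal_def, rp_sector_vol a b ha hab hb, hdet]
  rw [ENNReal.toReal_ofReal (by positivity)]
  rw [abs_of_pos (by positivity)]; ring

/-- Tannery-type lemma. -/
lemma rp_tannery (N : ℝ → ℝ) (L : ℝ) (hmono : Monotone N) (h0 : ∀ x, x < 1 → N x = 0)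
    (hlim : Tendsto (fun c => N c / c) atTop (nhds L)) (g : ℕ → ℝ) (hg : ∀ d, |g d| ≤ 1) :
    Tendsto (fun c : ℝ => ∑' d : ℕ, g d * N (c / (d : ℝ) ^ 2) / c) atTop
      (nhds (∑' d : ℕ, g d * (L / (d : ℝ) ^ 2))) := by
  have hnn : ∀ x, 0 ≤ N x := fun x => by
    rcases lt_or_ge x 1 with h | h
    · rw [h0 x h]
    · rw [← h0 0 (by norm_num)]; exact hmono (by linarith)
  obtain ⟨C, hC0, hC⟩ : ∃ C, 0 ≤ C ∧ ∀ x, 0 < x → N x ≤ C * x := by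
    have h1 := hlim.eventually_lt_const (lt_add_one L)
    obtain ⟨x0, hx0⟩ := eventually_atTop.1 h1
    refine ⟨max (L + 1) (N x0), le_max_of_le_right (hnn _), fun x hx => ?_⟩
    rcases lt_or_ge x 1 with h | h
    · rw [h0 x h]; exact mul_nonneg (le_max_of_le_right (hnn _)) hx.le
    rcases le_total x0 x with h' | h'
    · have := hx0 x h'
      rw [div_lt_iff₀ hx] at this
      exact this.le.trans (mul_le_mul_of_nonneg_right (le_max_left _ _) hx.le)
    · calc N x ≤ N x0 := hmono h'
        _ ≤ N x0 * x := le_mul_of_one_le_right (hnn _) h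
        _ ≤ _ := mul_le_mul_of_nonneg_right (le_max_right _ _) hx.le
  apply tendsto_tsum_of_dominated_convergence (bound := fun d : ℕ => C * (1 / (d : ℝ) ^ 2))
  · exact (Real.summable_one_div_nat_pow.2 one_lt_two).mul_left C
  · intro d
    rcases Nat.eq_zero_or_pos d with rfl | hd
    · simp [h0 0 one_pos]
    have hd' : (0 : ℝ) < (d : ℝ) ^ 2 := by positivity
    have h1 : Tendsto (fun c : ℝ => c / (d : ℝ) ^ 2) atTop atTop := tendsto_id.atTop_div_const hd'
    have h2 := ((hlim.comp h1).div_const ((d : ℝ) ^ 2)).const_mul (g d)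
    refine h2.congr' ?_
    filter_upwards [eventually_gt_atTop 0] with c hc
    simp only [Function.comp]
    field_simp
  · filter_upwards [eventually_gt_atTop 0] with c hc d
    rcases Nat.eq_zero_or_pos d with rfl | hd
    · simp [h0 0 one_pos]
    have hd' : (0 : ℝ) < (d : ℝ) ^ 2 := by positivity
    rw [Real.norm_eq_abs, abs_div, abs_mul, abs_of_pos hc, abs_of_nonneg (hnn _), div_le_iff₀ hc]
    calc _ ≤ 1 * (C * (c / (d : ℝ) ^ 2)) := mul_le_mul (hg d) (hC _ (by positivity)) (hnn _) zero_le_one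
      _ = _ := by ring

/-- Moebius restricted to odd integers. -/
noncomputable def rpMu (d : ℕ) : ℝ := if Odd d then (ArithmeticFunction.moebius d : ℝ) else 0

lemma rp_mu_abs (d : ℕ) : |rpMu d| ≤ 1 := by
  unfold rpMu
  split_ifs
  · exact_mod_cast ArithmeticFunction.abs_moebius_le_one
  · simp

lemma rp_mu_sum : ∑' d : ℕ, rpMu d * (1 / (d : ℝ) ^ 2) = 8 / Real.pi ^ 2 := by
  have h2 : (1 : ℝ) < (2 : ℂ).re := by norm_num
  have h := DirichletCharacter.LSeries.mul_mu_eq_one (1 : DirichletCharacter ℂ 2) h2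
  rw [← DirichletCharacter.LFunction_eq_LSeries _ h2] at h
  have h3 := DirichletCharacter.LFunctionTrivChar_eq_mul_riemannZeta (N := 2) (s := 2) (by norm_num)
  rw [DirichletCharacter.LFunctionTrivChar] at h3
  rw [h3, riemannZeta_two, Nat.prime_two.primeFactors] at h
  have h4 : LSeries ((fun n : ℕ => (1 : DirichletCharacter ℂ 2) n) * fun n : ℕ => ((ArithmeticFunction.moebius n : ℤ) : ℂ)) 2 =
      ((∑' d : ℕ, rpMu d * (1 / (d : ℝ) ^ 2) : ℝ) : ℂ) := by
    rw [LSeries, Complex.ofReal_tsum]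
    congr 1
    ext d
    rcases Nat.eq_zero_or_pos d with rfl | hd
    · simp
    rw [LSeries.term_of_ne_zero hd.ne']
    unfold rpMu
    by_cases ho : Odd d
    · have : IsUnit ((d : ℕ) : ZMod 2) := by
        rw [ZMod.isUnit_iff_coprime]; exact ho.coprime_two_right
      simp only [Pi.mul_apply, MulChar.one_apply this, if_pos ho]
      push_cast
      norm_num
      rfl
    · have : ¬ IsUnit ((d : ℕ) : ZMod 2) := by
        rw [ZMod.isUnit_iff_coprime, Nat.coprime_two_right]; exact ho
      simp [MulChar.map_nonunit _ this, ho]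
  rw [h4] at h
  have h5 : (3 / 4 * (Real.pi ^ 2 / 6)) * (∑' d : ℕ, rpMu d * (1 / (d : ℝ) ^ 2)) = 1 := by
    have e : ∏ p ∈ ({2} : Finset ℕ), (1 - (p : ℂ) ^ (-2 : ℂ)) = 3 / 4 := by
      simp [Complex.cpow_neg]; norm_num
    rw [e] at h
    generalize (∑' d : ℕ, rpMu d * (1 / (d : ℝ) ^ 2)) = T at h ⊢
    apply Complex.ofReal_injective
    push_cast
    exact h
  have hpi := Real.pi_pos
  field_simp at h5 ⊢
  linarith

/-- Integer points of opposite parity in the cone, of squared norm at most `c`. -/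
def rpO (a b c : ℝ) : Set (ℤ × ℤ) :=
  {z | ((z.1 : ℝ), (z.2 : ℝ)) ∈ rpCone a b ∧ (z.1 : ℝ) ^ 2 + (z.2 : ℝ) ^ 2 ≤ c ∧ Odd (z.1 + z.2)}

lemma rp_ball_finite (c : ℝ) : {z : ℤ × ℤ | (z.1 : ℝ) ^ 2 + (z.2 : ℝ) ^ 2 ≤ c}.Finite := by
  apply Set.Finite.subset (Set.finite_Icc ((-⌈|c|⌉, -⌈|c|⌉) : ℤ × ℤ) (⌈|c|⌉, ⌈|c|⌉))
  rintro ⟨m, n⟩ h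
  simp only [Set.mem_ofPred_eq] at h
  have hc : c ≤ (⌈|c|⌉ : ℝ) := (le_abs_self c).trans (Int.le_ceil _)
  have h1 : m ^ 2 + n ^ 2 ≤ ⌈|c|⌉ := by exact_mod_cast h.trans hc
  have aux : ∀ k : ℤ, |k| ≤ k ^ 2 := fun k => by
    rw [← sq_abs]; exact Int.le_self_sq _
  have h2 := abs_le.1 ((aux m).trans (by nlinarith [sq_nonneg n] : m ^ 2 ≤ ⌈|c|⌉))
  have h3 := abs_le.1 ((aux n).trans (by nlinarith [sq_nonneg m] : n ^ 2 ≤ ⌈|c|⌉))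
  exact ⟨⟨h2.1, h3.1⟩, ⟨h2.2, h3.2⟩⟩

lemma rp_O_finite (a b c : ℝ) : (rpO a b c).Finite :=
  (rp_ball_finite c).subset fun _ h => h.2.1

lemma rp_O_mono (a b : ℝ) : Monotone fun c => ((rpO a b c).ncard : ℝ) := by
  intro c c' h
  have : (rpO a b c).ncard ≤ (rpO a b c').ncard :=
    Set.ncard_le_ncard (fun z hz => ⟨hz.1, hz.2.1.trans h, hz.2.2⟩) (rp_O_finite _ _ _)
  simpa using this

lemma rp_O_zero (a b c : ℝ) (hc : c < 1) : ((rpO a b c).ncard : ℝ) = 0 := by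
  have : rpO a b c = ∅ := by
    ext ⟨m, n⟩
    simp only [Set.mem_empty_iff_false, iff_false]
    rintro ⟨h1, h2, -⟩
    have hn : (0 : ℝ) < n := h1.1
    have : (1 : ℝ) ≤ n := by exact_mod_cast hn
    simp only at h2
    nlinarith [sq_nonneg (m : ℝ)]
  simp [this]

lemma rp_O_lim (a b : ℝ) (ha : 0 ≤ a) (hab : a < b) (hb : b ≤ Real.pi) :
    Tendsto (fun c => ((rpO a b c).ncard : ℝ) / c) atTop (nhds ((b - a) / 4)) := by
  have h1 := rp_count_cone (rpCone a b) (rp_cone_convex a b) (rp_cone_meas a b)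
    (fun v hv r hr => (rp_cone_smul a b v r hr).2 hv) 1 one_pos
  rw [rp_sector_vol a b ha hab hb] at h1
  let f : ℝ × ℝ →ₗ[ℝ] ℝ × ℝ := (LinearMap.fst ℝ ℝ ℝ - LinearMap.snd ℝ ℝ ℝ).prod (LinearMap.fst ℝ ℝ ℝ + LinearMap.snd ℝ ℝ ℝ)
  have h2 := rp_count_cone {v : ℝ × ℝ | (v.1 - v.2, v.1 + v.2) ∈ rpCone a b}
    ((rp_cone_convex a b).linear_preimage f)
    ((show Measurable (fun v : ℝ × ℝ => (v.1 - v.2, v.1 + v.2)) by fun_prop) (rp_cone_meas a b))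
    (fun v hv r hr => by
      have := (rp_cone_smul a b _ r hr).2 hv
      simpa [mul_sub, mul_add] using this) 2 two_pos
  rw [rp_sector_vol' a b ha hab hb] at h2
  have h3 := h1.sub h2
  rw [show (b - a) / 2 - (b - a) / 4 = (b - a) / 4 by ring] at h3
  refine h3.congr fun c => ?_
  rw [← sub_div]
  congr 1
  rw [sub_eq_iff_eq_add]
  let ψ : ℤ × ℤ → ℤ × ℤ := fun z => (z.1 - z.2, z.1 + z.2)
  have hψ : Function.Injective ψ := by
    rintro ⟨x, y⟩ ⟨x', y'⟩ h
    simp only [ψ, Prod.mk.injEq] at h ⊢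
    omega
  rw [← Set.ncard_image_of_injective {z : ℤ × ℤ | ((z.1 : ℝ), (z.2 : ℝ)) ∈ {v : ℝ × ℝ | (v.1 - v.2, v.1 + v.2) ∈ rpCone a b} ∧ 2 * ((z.1 : ℝ) ^ 2 + (z.2 : ℝ) ^ 2) ≤ c} hψ]
  have hU : {z : ℤ × ℤ | ((z.1 : ℝ), (z.2 : ℝ)) ∈ rpCone a b ∧ 1 * ((z.1 : ℝ) ^ 2 + (z.2 : ℝ) ^ 2) ≤ c} =
    rpO a b c ∪ ψ '' {z : ℤ × ℤ | ((z.1 : ℝ), (z.2 : ℝ)) ∈ {v : ℝ × ℝ | (v.1 - v.2, v.1 + v.2) ∈ rpCone a b} ∧ 2 * ((z.1 : ℝ) ^ 2 + (z.2 : ℝ) ^ 2) ≤ c} := by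
    ext ⟨m, n⟩
    simp only [rpO, Set.mem_ofPred_eq, Set.mem_union, Set.mem_image, one_mul]
    constructor
    · rintro ⟨h1, h2⟩
      rcases Int.even_or_odd (m + n) with he | ho
      · right
        obtain ⟨k, hk⟩ := he
        obtain rfl : n = k + k - m := by omega
        refine ⟨(k, k - m), ⟨?_, ?_⟩, ?_⟩
        · push_cast at h1 ⊢
          convert h1 using 2 <;> ring
        · push_cast at h2 ⊢
          convert h2 using 1; ring
        · simp only [ψ, Prod.mk.injEq]; omega
      · exact Or.inl ⟨h1, h2, ho⟩
    · rintro (⟨h1, h2, -⟩ | ⟨⟨x, y⟩, ⟨h1, h2⟩, h3⟩)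
      · exact ⟨h1, h2⟩
      · simp only [ψ, Prod.mk.injEq] at h3
        obtain ⟨rfl, rfl⟩ := h3
        push_cast
        refine ⟨h1, ?_⟩
        simp only at h2
        linarith
  have hfin := Set.Finite.subset (rp_ball_finite c) (t := {z : ℤ × ℤ | ((z.1 : ℝ), (z.2 : ℝ)) ∈ rpCone a b ∧ 1 * ((z.1 : ℝ) ^ 2 + (z.2 : ℝ) ^ 2) ≤ c}) (fun z hz => by simpa using hz.2)
  rw [hU] at hfin ⊢
  rw [Set.ncard_union_eq _ (hfin.subset Set.subset_union_left) (hfin.subset Set.subset_union_right)]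
  · push_cast; rfl
  · rw [Set.disjoint_left]
    rintro ⟨m, n⟩ ⟨-, -, h⟩ ⟨⟨x, y⟩, -, h'⟩
    simp only [ψ, Prod.mk.injEq] at h' h
    obtain ⟨k, hk⟩ := h
    omega

/-- Points of `rpO` divisible by an odd `d` are a rescaled copy of `rpO`. -/
lemma rp_O_dvd (a b c : ℝ) (d : ℕ) (hd : Odd d) :
    {z ∈ rpO a b c | d ∣ Int.gcd z.1 z.2}.ncard = (rpO a b (c / (d : ℝ) ^ 2)).ncard := by
  have hd0 : (0 : ℝ) < d := by exact_mod_cast hd.pos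
  have hdz : (d : ℤ) ≠ 0 := by exact_mod_cast hd.pos.ne'
  let ψ : ℤ × ℤ → ℤ × ℤ := fun z => (d * z.1, d * z.2)
  have hψ : Function.Injective ψ := by
    rintro ⟨x, y⟩ ⟨x', y'⟩ h
    simp only [ψ, Prod.mk.injEq] at h ⊢
    exact ⟨mul_left_cancel₀ hdz h.1, mul_left_cancel₀ hdz h.2⟩
  rw [← Set.ncard_image_of_injective (rpO a b (c / (d : ℝ) ^ 2)) hψ]
  congr 1
  have key : ∀ x y : ℤ, ψ (x, y) ∈ rpO a b c ↔ (x, y) ∈ rpO a b (c / (d : ℝ) ^ 2) := by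
    intro x y
    simp only [rpO, ψ, Set.mem_ofPred_eq]
    refine and_congr ?_ (and_congr ?_ ?_)
    · rw [← rp_cone_smul a b ((x : ℝ), (y : ℝ)) d hd0]; simp
    · rw [le_div_iff₀ (by positivity)]; push_cast
      rw [show ((d : ℝ) * x) ^ 2 + ((d : ℝ) * y) ^ 2 = ((x : ℝ) ^ 2 + (y : ℝ) ^ 2) * (d : ℝ) ^ 2 by ring]
    · rw [← mul_add, Int.odd_mul]
      have : Odd (d : ℤ) := by exact_mod_cast hd
      tauto
  ext ⟨m, n⟩
  constructor
  · rintro ⟨h1, h2⟩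
    have h3 : (d : ℤ) ∣ m := (Int.natCast_dvd_natCast.2 h2).trans (Int.gcd_dvd_left ..)
    have h4 : (d : ℤ) ∣ n := (Int.natCast_dvd_natCast.2 h2).trans (Int.gcd_dvd_right ..)
    obtain ⟨x, rfl⟩ := h3
    obtain ⟨y, rfl⟩ := h4
    exact ⟨(x, y), (key x y).1 h1, rfl⟩
  · rintro ⟨⟨x, y⟩, h1, h2⟩
    rw [← h2]
    refine ⟨(key x y).2 h1, ?_⟩
    simp only [ψ]
    rw [Int.gcd_mul_left]; simp

lemma rp_moebius (a b c : ℝ) :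
    ({z ∈ rpO a b c | Int.gcd z.1 z.2 = 1}.ncard : ℝ) =
      ∑' d : ℕ, rpMu d * ((rpO a b (c / (d : ℝ) ^ 2)).ncard : ℝ) := by
  classical
  let O : Finset (ℤ × ℤ) := (rp_O_finite a b c).toFinset
  have hO : ∀ z, z ∈ O ↔ z ∈ rpO a b c := fun z => Set.Finite.mem_toFinset _
  let K : ℕ := ⌈|c|⌉₊ + 1
  have hK : c < K := by
    have := Nat.le_ceil |c|
    have := le_abs_self c
    simp only [K]; push_cast; linarith
  have hterm : ∀ d : ℕ, rpMu d * ((rpO a b (c / (d : ℝ) ^ 2)).ncard : ℝ) =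
      ∑ z ∈ O, if d ∣ Int.gcd z.1 z.2 then (ArithmeticFunction.moebius d : ℝ) else 0 := by
    intro d
    by_cases hd : Odd d
    · rw [← rp_O_dvd a b c d hd, rpMu, if_pos hd, ← Finset.sum_filter, Finset.sum_const, nsmul_eq_mul, mul_comm]
      congr 2
      rw [← Set.ncard_coe_finset]
      congr 1
      ext z
      simp [hO]
    · rw [rpMu, if_neg hd, zero_mul]
      symm
      apply Finset.sum_eq_zero
      intro z hz
      rw [if_neg]
      intro h
      have h5 : (2 : ℤ) ∣ d := by exact_mod_cast (Nat.not_odd_iff_even.1 hd).two_dvd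
      have h3 : (2 : ℤ) ∣ z.1 := h5.trans ((Int.natCast_dvd_natCast.2 h).trans (Int.gcd_dvd_left ..))
      have h4 : (2 : ℤ) ∣ z.2 := h5.trans ((Int.natCast_dvd_natCast.2 h).trans (Int.gcd_dvd_right ..))
      obtain ⟨k, hk⟩ := ((hO z).1 hz).2.2
      omega
  rw [tsum_eq_sum (s := Finset.range K)]
  · rw [Finset.sum_congr rfl (fun d _ => hterm d), Finset.sum_comm]
    have : ∀ z ∈ O, (∑ d ∈ Finset.range K, if d ∣ Int.gcd z.1 z.2 then (ArithmeticFunction.moebius d : ℝ) else 0) =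
        if Int.gcd z.1 z.2 = 1 then 1 else 0 := by
      intro z hz
      have hz' := (hO z).1 hz
      have hn : (0 : ℝ) < z.2 := hz'.1.1
      have hn' : 0 < z.2 := by exact_mod_cast hn
      have hg0 : 0 < Int.gcd z.1 z.2 := Int.gcd_pos_of_ne_zero_right _ hn'.ne'
      have hgle : Int.gcd z.1 z.2 < K := by
        have h1 : (Int.gcd z.1 z.2 : ℤ) ≤ z.2 := Int.le_of_dvd hn' (Int.gcd_dvd_right ..)
        have h2 : (z.2 : ℝ) ≤ (z.2 : ℝ) ^ 2 := by exact_mod_cast Int.le_self_sq z.2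
        have h3 := hz'.2.1
        have h4 : ((Int.gcd z.1 z.2 : ℕ) : ℝ) ≤ z.2 := by exact_mod_cast h1
        have : ((Int.gcd z.1 z.2 : ℕ) : ℝ) < K := by nlinarith [sq_nonneg (z.1 : ℝ)]
        exact_mod_cast this
      rw [← Finset.sum_filter]
      have : (Finset.range K).filter (fun d => d ∣ Int.gcd z.1 z.2) = (Int.gcd z.1 z.2).divisors := by
        ext d
        simp only [Finset.mem_filter, Finset.mem_range, Nat.mem_divisors]
        constructor
        · rintro ⟨-, h⟩; exact ⟨h, hg0.ne'⟩
        · rintro ⟨h, -⟩; exact ⟨(Nat.le_of_dvd hg0 h).trans_lt hgle, h⟩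
      rw [this]
      have h6 := congrArg (fun f : ArithmeticFunction ℤ => f (Int.gcd z.1 z.2)) ArithmeticFunction.moebius_mul_coe_zeta
      simp only [ArithmeticFunction.coe_mul_zeta_apply, ArithmeticFunction.one_apply] at h6
      exact_mod_cast h6
    rw [Finset.sum_congr rfl this, ← Finset.sum_filter, Finset.sum_const, nsmul_eq_mul, mul_one]
    congr 1
    rw [← Set.ncard_coe_finset]
    congr 1
    ext z
    simp [hO]
  · intro d hd
    rw [Finset.mem_range, not_lt] at hd
    have hd1 : (K : ℝ) ≤ d := by exact_mod_cast hd
    have hK1 : (1 : ℝ) ≤ K := by simp [K]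
    rw [rp_O_zero, mul_zero]
    rw [div_lt_one (by nlinarith)]
    nlinarith

lemma rp_prim_lim (a b : ℝ) (ha : 0 ≤ a) (hab : a < b) (hb : b ≤ Real.pi) :
    Tendsto (fun c => ({z ∈ rpO a b c | Int.gcd z.1 z.2 = 1}.ncard : ℝ) / c) atTop
      (nhds (2 * (b - a) / Real.pi ^ 2)) := by
  have h := rp_tannery _ _ (rp_O_mono a b) (rp_O_zero a b) (rp_O_lim a b ha hab hb) rpMu rp_mu_abs
  have e : ∑' d : ℕ, rpMu d * ((b - a) / 4 / (d : ℝ) ^ 2) = 2 * (b - a) / Real.pi ^ 2 := by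
    rw [show 2 * (b - a) / Real.pi ^ 2 = (b - a) / 4 * (8 / Real.pi ^ 2) by ring, ← rp_mu_sum, ← tsum_mul_left]
    congr 1; ext d; ring
  rw [e] at h
  refine h.congr fun c => ?_
  rw [rp_moebius, tsum_div_const]

/-- The rational parametrization of the circle. -/
def rpPt (z : ℤ × ℤ) : ℚ × ℚ :=
  (((z.1 ^ 2 - z.2 ^ 2 : ℤ) : ℚ) / ((z.1 ^ 2 + z.2 ^ 2 : ℤ) : ℚ), ((2 * z.1 * z.2 : ℤ) : ℚ) / ((z.1 ^ 2 + z.2 ^ 2 : ℤ) : ℚ))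

lemma rp_coprime (m n : ℤ) (hg : Int.gcd m n = 1) (ho : Odd (m + n)) :
    IsCoprime (m ^ 2 - n ^ 2) (m ^ 2 + n ^ 2) := by
  have h1 : IsCoprime m n := Int.isCoprime_iff_gcd_eq_one.2 hg
  have h2 : IsCoprime (2 : ℤ) (m + n) := by
    rw [Int.isCoprime_iff_gcd_eq_one]
    obtain ⟨k, hk⟩ := ho
    rw [hk]
    simp [Int.gcd_comm]
  have h3 : IsCoprime (2 : ℤ) (m - n) := by
    have := h2.add_mul_left_right (-n)
    rwa [show m + n + 2 * (-n) = m - n by ring] at this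
  have h4 : IsCoprime n (m + n) := by
    have := h1.symm.add_mul_left_right 1
    rwa [mul_one] at this
  have h5 : IsCoprime n (m - n) := by
    have := h1.symm.add_mul_left_right (-1)
    rwa [show m + n * (-1) = m - n by ring] at this
  have h6 : IsCoprime (2 * (n * n)) ((m + n) * (m - n)) := by
    refine IsCoprime.mul_left (h2.mul_right h3) (IsCoprime.mul_left ?_ ?_) <;> exact h4.mul_right h5
  have h7 := h6.symm.add_mul_left_right 1
  rwa [show (m + n) * (m - n) = m ^ 2 - n ^ 2 by ring, show 2 * (n * n) + (m ^ 2 - n ^ 2) * 1 = m ^ 2 + n ^ 2 by ring] at h7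

lemma rp_num_den (m n : ℤ) (hn : 0 < n) (hg : Int.gcd m n = 1) (ho : Odd (m + n)) :
    (rpPt (m, n)).1.num = m ^ 2 - n ^ 2 ∧ ((rpPt (m, n)).1.den : ℤ) = m ^ 2 + n ^ 2 := by
  have hpos : 0 < m ^ 2 + n ^ 2 := by positivity
  have hc := Int.isCoprime_iff_gcd_eq_one.1 (rp_coprime m n hg ho)
  exact ⟨Rat.num_div_eq_of_coprime hpos hc, Rat.den_div_eq_of_coprime hpos hc⟩

lemma rp_height (m n : ℤ) (hn : 0 < n) (hg : Int.gcd m n = 1) (ho : Odd (m + n)) :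
    (height (rpPt (m, n)).1 (rpPt (m, n)).2 : ℤ) = m ^ 2 + n ^ 2 := by
  have hpos : 0 < m ^ 2 + n ^ 2 := by positivity
  have hposq : (0 : ℚ) < (m : ℚ) ^ 2 + (n : ℚ) ^ 2 := by exact_mod_cast hpos
  obtain ⟨-, hd⟩ := rp_num_den m n hn hg ho
  rw [← hd]
  congr 1
  have hdq : ((rpPt (m, n)).1.den : ℚ) = ((m ^ 2 + n ^ 2 : ℤ) : ℚ) := by exact_mod_cast hd
  apply le_antisymm
  · apply Nat.sInf_le
    refine ⟨Rat.pos _, ⟨m ^ 2 - n ^ 2, ?_⟩, ⟨2 * m * n, ?_⟩⟩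
    · rw [hdq, rpPt]; push_cast; field_simp
    · rw [hdq, rpPt]; push_cast; field_simp
  · apply le_csInf
    · refine ⟨(rpPt (m, n)).1.den, Rat.pos _, ⟨m ^ 2 - n ^ 2, ?_⟩, ⟨2 * m * n, ?_⟩⟩
      · rw [hdq, rpPt]; push_cast; field_simp
      · rw [hdq, rpPt]; push_cast; field_simp
    · rintro h ⟨h0, ⟨x, hx⟩, -⟩
      apply Nat.le_of_dvd h0
      have hh : (h : ℚ) ≠ 0 := by exact_mod_cast h0.ne'
      have : (rpPt (m, n)).1 = Rat.divInt x h := by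
        rw [Rat.divInt_eq_div, ← hx]; push_cast; field_simp
      rw [this]
      exact_mod_cast Rat.den_dvd x h

/-- Double-angle description of the parametrization. -/
lemma rp_pt_trig (m n : ℤ) (r t : ℝ) (hr : 0 < r) (hm : (m : ℝ) = r * Real.cos t) (hn : (n : ℝ) = r * Real.sin t) :
    ((rpPt (m, n)).1 : ℝ) = Real.cos (2 * t) ∧ ((rpPt (m, n)).2 : ℝ) = Real.sin (2 * t) := by
  have h : (m : ℝ) ^ 2 + (n : ℝ) ^ 2 = r ^ 2 := by
    rw [hm, hn]; linear_combination r ^ 2 * Real.sin_sq_add_cos_sq t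
  simp only [rpPt]
  push_cast
  rw [h, hm, hn, Real.cos_two_mul', Real.sin_two_mul]
  constructor
  · field_simp
  · field_simp

lemma rp_inj : Set.InjOn rpPt {z | 0 < z.2 ∧ Int.gcd z.1 z.2 = 1} := by
  have key : ∀ m n : ℤ, 0 < n → 1 + (rpPt (m, n)).1 ≠ 0 ∨ m = 0 := by
    intro m n hn
    by_cases hm : m = 0
    · exact Or.inr hm
    left
    have h1 : (0 : ℚ) < n := by exact_mod_cast hn
    have h2 : (m : ℚ) ≠ 0 := by exact_mod_cast hm
    have h3 : (m : ℚ) ^ 2 + (n : ℚ) ^ 2 ≠ 0 := by positivity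
    simp only [rpPt]; push_cast
    field_simp
    ring_nf
    positivity
  have key2 : ∀ m n : ℤ, 0 < n → m * (1 - (rpPt (m, n)).1) = n * (rpPt (m, n)).2 ∧ 1 - (rpPt (m, n)).1 ≠ 0 := by
    intro m n hn
    have h1 : (0 : ℚ) < n := by exact_mod_cast hn
    have h3 : (m : ℚ) ^ 2 + (n : ℚ) ^ 2 ≠ 0 := by positivity
    simp only [rpPt]; push_cast
    constructor
    · field_simp; ring
    · field_simp
      ring_nf
      positivity
  rintro ⟨m, n⟩ ⟨h1, h2⟩ ⟨m', n'⟩ ⟨h1', h2'⟩ h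
  simp only at h1 h2 h1' h2'
  obtain ⟨e1, e2⟩ := key2 m n h1
  obtain ⟨e1', e2'⟩ := key2 m' n' h1'
  rw [← h] at e1' e2'
  have e3 : (m : ℚ) * n' = m' * n := by
    apply mul_right_cancel₀ e2
    linear_combination n' * e1 - n * e1'
  have e4 : m * n' = m' * n := by exact_mod_cast e3
  have c1 : IsCoprime m n := Int.isCoprime_iff_gcd_eq_one.2 h2
  have c2 : IsCoprime m' n' := Int.isCoprime_iff_gcd_eq_one.2 h2'
  have d1 : n ∣ n' := c1.symm.dvd_of_dvd_mul_left (Dvd.intro_left m' e4.symm)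
  have d2 : n' ∣ n := c2.symm.dvd_of_dvd_mul_left (Dvd.intro_left m e4)
  have e5 : n = n' := Int.dvd_antisymm h1.le h1'.le d1 d2
  subst e5
  have e6 : m = m' := mul_right_cancel₀ h1.ne' e4
  rw [e6]

/-- The set of the statement is the image of the primitive lattice points. -/
lemma rp_set_eq (θ₁ θ₂ : ℝ)
    (h0 : 0 ≤ θ₁) (h₁₂ : θ₁ < θ₂) (h₂ : θ₂ ≤ 2 * Real.pi) (H : ℕ) :
    {pq : ℚ × ℚ | pq.1 ^ 2 + pq.2 ^ 2 = 1 ∧ pq.1 ≠ 0 ∧ pq.2 ≠ 0 ∧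
              Odd (|pq.1|).num ∧
              (∃ t : ℝ, θ₁ ≤ t ∧ t < θ₂ ∧
                (pq.1 : ℝ) = Real.cos t ∧ (pq.2 : ℝ) = Real.sin t) ∧
              height pq.1 pq.2 ≤ H} =
    rpPt '' ({z ∈ rpO (θ₁ / 2) (θ₂ / 2) H | Int.gcd z.1 z.2 = 1} \ {(0, 1)}) := by
  have hpi := Real.pi_pos
  ext ⟨p, q⟩
  constructor
  · rintro ⟨hpq, hp, hq, hodd, ⟨t, ht1, ht2, hpt, hqt⟩, hH⟩
    simp only at hpq hp hq hodd hpt hqt hH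
    let s : ℚ := (1 + p) / q
    have hs : s * q = 1 + p := by simp only [s]; field_simp
    have hq1 : q * (s ^ 2 + 1) = 2 * s := by
      apply mul_right_cancel₀ hq
      have : q ^ 2 = 1 - p ^ 2 := by linarith
      linear_combination (s * q + (1 + p) - 2) * hs + this
    have hp1 : p * (s ^ 2 + 1) = s ^ 2 - 1 := by
      linear_combination s * hq1 - (s ^ 2 + 1) * hs
    have hn : (0 : ℤ) < (s.den : ℤ) := by exact_mod_cast s.pos
    have hnq : (0 : ℚ) < (s.den : ℚ) := by exact_mod_cast s.pos
    have hg : Int.gcd s.num s.den = 1 := s.reduced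
    have hsnd : s = s.num / s.den := (Rat.num_div_den s).symm
    have hpt' : rpPt (s.num, (s.den : ℤ)) = (p, q) := by
      have e : (s.num : ℚ) = s * s.den := (Rat.mul_den_eq_num s).symm
      have h3 : (s ^ 2 + 1) ≠ 0 := by positivity
      simp only [rpPt, Prod.mk.injEq]
      push_cast
      rw [e]
      constructor
      · rw [div_eq_iff (by positivity)]
        linear_combination -(s.den : ℚ) ^ 2 * hp1
      · rw [div_eq_iff (by positivity)]
        linear_combination -(s.den : ℚ) ^ 2 * hq1
    have hpar : Odd (s.num + s.den) := by
      by_contra hev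
      rw [Int.not_odd_iff_even] at hev
      rcases Int.even_or_odd s.num with hme | hmo
      · have hne : Even (s.den : ℤ) := (Int.even_add.1 hev).1 hme
        have h2 : ((2 : ℕ) : ℤ) ∣ Int.gcd s.num s.den := Int.dvd_coe_gcd hme.two_dvd hne.two_dvd
        rw [hg] at h2
        norm_num at h2
      · have hno : Odd (s.den : ℤ) := by
          by_contra h
          rw [Int.not_odd_iff_even] at h
          exact (Int.not_even_iff_odd.2 hmo) ((Int.even_add.1 hev).2 h)
        obtain ⟨i, hi⟩ := hmo
        obtain ⟨j, hj⟩ := hno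
        have hp2 : p * ((s.num ^ 2 + (s.den : ℤ) ^ 2 : ℤ) : ℚ) = ((s.num ^ 2 - (s.den : ℤ) ^ 2 : ℤ) : ℚ) := by
          have := congrArg Prod.fst hpt'
          simp only [rpPt] at this
          rw [← this]
          rw [div_mul_cancel₀]
          push_cast
          positivity
        rw [hi, hj] at hp2
        have hp3 : p.num * ((2 * i + 1) ^ 2 + (2 * j + 1) ^ 2) = p.den * ((2 * i + 1) ^ 2 - (2 * j + 1) ^ 2) := by
          have e : (p.num : ℚ) = p * p.den := (Rat.mul_den_eq_num p).symm
          have : (p.num : ℚ) * ((2 * i + 1) ^ 2 + (2 * j + 1) ^ 2) = p.den * ((2 * i + 1) ^ 2 - (2 * j + 1) ^ 2) := by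
            push_cast at hp2
            rw [e]; linear_combination (p.den : ℚ) * hp2
          exact_mod_cast this
        have hp4 : p.num * (2 * (i ^ 2 + i + j ^ 2 + j) + 1) = 2 * (p.den * (i ^ 2 + i - j ^ 2 - j)) := by linarith
        have hodd' : Odd p.num := by
          rw [Rat.num_abs_eq_abs_num] at hodd
          exact odd_abs.1 hodd
        have : Odd (p.num * (2 * (i ^ 2 + i + j ^ 2 + j) + 1)) := hodd'.mul ⟨_, rfl⟩
        rw [hp4] at this
        exact (Int.not_even_iff_odd.2 this) (even_two_mul _)
    refine ⟨(s.num, (s.den : ℤ)), ⟨⟨⟨?_, ?_, hpar⟩, hg⟩, ?_⟩, hpt'⟩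
    ·
      have hτ0 : 0 ≤ t / 2 := by linarith
      have hτ1 : t / 2 < Real.pi := by linarith
      have hqr : Real.sin t ≠ 0 := by rw [← hqt]; exact_mod_cast hq
      have e2 : Real.sin t = 2 * Real.sin (t / 2) * Real.cos (t / 2) := by
        rw [← Real.sin_two_mul]; congr 1; ring
      have e3 : Real.cos t = 2 * Real.cos (t / 2) ^ 2 - 1 := by
        rw [← Real.cos_two_mul]; congr 1; ring
      have hsin : Real.sin (t / 2) ≠ 0 := by
        intro h; apply hqr; rw [e2, h]; ring
      have hcos : Real.cos (t / 2) ≠ 0 := by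
        intro h; apply hqr; rw [e2, h]; ring
      have hτpos : 0 < t / 2 := by
        rcases hτ0.lt_or_eq with h | h
        · exact h
        · exfalso; apply hsin; rw [← h]; simp
      have hsinpos := Real.sin_pos_of_pos_of_lt_pi hτpos hτ1
      have hsr : (s : ℝ) * Real.sin (t / 2) = Real.cos (t / 2) := by
        have : (s : ℝ) * q = 1 + p := by exact_mod_cast hs
        rw [hpt, hqt, e2, e3] at this
        apply mul_right_cancel₀ hcos
        linarith
      have hmr : (s.num : ℝ) = s * s.den := by exact_mod_cast (Rat.mul_den_eq_num s).symm
      have hdr : (0 : ℝ) < s.den := by exact_mod_cast s.pos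
      have := (rp_cone_polar (θ₁ / 2) (θ₂ / 2) (by linarith) (by linarith) (by linarith) (t / 2)
        (s.den / Real.sin (t / 2)) (by linarith) hτ1 (by positivity)).2 ⟨hτpos, by linarith, by linarith⟩
      convert this using 2
      · simp only
        rw [hmr, ← hsr]; field_simp
      · simp only
        push_cast
        field_simp
    · have := rp_height s.num s.den hn hg hpar
      rw [hpt'] at this
      have h3 : s.num ^ 2 + (s.den : ℤ) ^ 2 ≤ (H : ℤ) := by rw [← this]; exact_mod_cast hH
      exact_mod_cast h3
    · intro h
      have h' : s.num = 0 := congrArg Prod.fst h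
      have : s = 0 := Rat.num_eq_zero.1 h'
      rw [this] at hq1
      simp at hq1
      exact hq hq1
  · rintro ⟨⟨m, n⟩, ⟨⟨⟨hcone, hle, hpar⟩, hg⟩, hne⟩, hz⟩
    simp only at hcone hle hpar hg
    have hnr : (0 : ℝ) < n := hcone.1
    have hn : 0 < n := by exact_mod_cast hnr
    have hnq : (0 : ℚ) < n := by exact_mod_cast hn
    have hm : m ≠ 0 := by
      rintro rfl
      apply hne
      simp only [Int.gcd_zero_left] at hg
      have : n = 1 := by omega
      simp [this]
    have hmq : (m : ℚ) ≠ 0 := by exact_mod_cast hm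
    obtain ⟨hnum, hden⟩ := rp_num_den m n hn hg hpar
    have hht := rp_height m n hn hg hpar
    have hoddnum : Odd (m ^ 2 - n ^ 2) := by
      rw [show m ^ 2 - n ^ 2 = (m + n) * (m + n - 2 * n) by ring]
      exact hpar.mul (hpar.sub_even (even_two_mul n))
    have hsum : (m : ℚ) ^ 2 + (n : ℚ) ^ 2 ≠ 0 := by positivity
    have hcirc : (rpPt (m, n)).1 ^ 2 + (rpPt (m, n)).2 ^ 2 = 1 := by
      simp only [rpPt]; push_cast; field_simp; ring
    have hq0 : (rpPt (m, n)).2 ≠ 0 := by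
      simp only [rpPt]; push_cast; positivity
    have hang : ∃ t : ℝ, θ₁ ≤ t ∧ t < θ₂ ∧
        ((rpPt (m, n)).1 : ℝ) = Real.cos t ∧ ((rpPt (m, n)).2 : ℝ) = Real.sin t := by
      let w : ℂ := ⟨m, n⟩
      have hw : w ≠ 0 := by
        intro h
        have := congrArg Complex.im h
        simp [w] at this
        omega
      have hr : 0 < ‖w‖ := norm_pos_iff.2 hw
      have e1 : (m : ℝ) = ‖w‖ * Real.cos w.arg := by rw [Complex.norm_mul_cos_arg]
      have e2 : (n : ℝ) = ‖w‖ * Real.sin w.arg := by rw [Complex.norm_mul_sin_arg]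
      have hlt : w.arg < Real.pi := by
        rcases (Complex.arg_le_pi w).lt_or_eq with h | h
        · exact h
        · rw [h] at e2; simp at e2; omega
      have h5 := hcone
      rw [e1, e2] at h5
      have h6 := (rp_cone_polar (θ₁ / 2) (θ₂ / 2) (by linarith) (by linarith) (by linarith) w.arg ‖w‖
        (Complex.neg_pi_lt_arg w) hlt hr).1 h5
      exact ⟨2 * w.arg, by linarith, by linarith, rp_pt_trig m n ‖w‖ w.arg hr e1 e2⟩
    rw [← hz]
    refine ⟨hcirc, ?_, hq0, ?_, hang, ?_⟩
    · intro h
      rw [h] at hnum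
      rw [← hnum] at hoddnum
      simp at hoddnum
    · rw [Rat.num_abs_eq_abs_num, hnum]
      exact odd_abs.2 hoddnum
    · have h3 : m ^ 2 + n ^ 2 ≤ (H : ℤ) := by exact_mod_cast hle
      rw [← hht] at h3
      exact_mod_cast h3


/-- **Counting rational points in `S¹_ℚ(odd)` by angle.**  Let `S¹_ℚ(odd)` be the set of
rational points `(p,q)` on the unit circle with `p ≠ 0`, `q ≠ 0` such that the numerator
of `|p|` in lowest terms is odd.  For `0 ≤ θ₁ < θ₂ ≤ 2π`, the number of points of
`S¹_ℚ(odd)` with angle `θ(p,q) ∈ [θ₁, θ₂)` and height at most `H` is asymptotic to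
`(θ₂−θ₁)/π² · H`. -/
theorem rational_points_odd_sector_count (θ₁ θ₂ : ℝ)
    (h0 : 0 ≤ θ₁) (h₁₂ : θ₁ < θ₂) (h₂ : θ₂ ≤ 2 * Real.pi) :
    Tendsto
      (fun H : ℕ =>
        (1 : ℝ) / H *
          ({pq : ℚ × ℚ | pq.1 ^ 2 + pq.2 ^ 2 = 1 ∧ pq.1 ≠ 0 ∧ pq.2 ≠ 0 ∧
              Odd (|pq.1|).num ∧
              (∃ t : ℝ, θ₁ ≤ t ∧ t < θ₂ ∧
                (pq.1 : ℝ) = Real.cos t ∧ (pq.2 : ℝ) = Real.sin t) ∧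
              height pq.1 pq.2 ≤ H}.ncard : ℝ))
      atTop (nhds ((θ₂ - θ₁) / Real.pi ^ 2)) := by
  have hlim := (rp_prim_lim (θ₁ / 2) (θ₂ / 2) (by linarith) (by linarith) (by linarith)).comp
    (tendsto_natCast_atTop_atTop (R := ℝ))
  rw [show 2 * (θ₂ / 2 - θ₁ / 2) / Real.pi ^ 2 = (θ₂ - θ₁) / Real.pi ^ 2 by ring] at hlim
  have hlim2 := hlim.sub (tendsto_one_div_atTop_nhds_zero_nat (𝕜 := ℝ))
  rw [sub_zero] at hlim2
  have hcard : ∀ H : ℕ, {pq : ℚ × ℚ | pq.1 ^ 2 + pq.2 ^ 2 = 1 ∧ pq.1 ≠ 0 ∧ pq.2 ≠ 0 ∧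
              Odd (|pq.1|).num ∧
              (∃ t : ℝ, θ₁ ≤ t ∧ t < θ₂ ∧
                (pq.1 : ℝ) = Real.cos t ∧ (pq.2 : ℝ) = Real.sin t) ∧
              height pq.1 pq.2 ≤ H}.ncard =
      ({z ∈ rpO (θ₁ / 2) (θ₂ / 2) H | Int.gcd z.1 z.2 = 1} \ {(0, 1)}).ncard := by
    intro H
    rw [rp_set_eq θ₁ θ₂ h0 h₁₂ h₂ H]
    apply Set.InjOn.ncard_image
    apply rp_inj.mono
    rintro z ⟨⟨⟨h1, -⟩, h2⟩, -⟩
    have h3 : (0 : ℝ) < z.2 := h1.1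
    exact ⟨by exact_mod_cast h3, h2⟩
  have hfin : ∀ H : ℕ, {z ∈ rpO (θ₁ / 2) (θ₂ / 2) H | Int.gcd z.1 z.2 = 1}.Finite := fun H =>
    Set.Finite.subset (rp_O_finite (θ₁ / 2) (θ₂ / 2) H) fun z hz => hz.1
  refine tendsto_of_tendsto_of_tendsto_of_le_of_le hlim2 hlim ?_ ?_
  · intro H
    dsimp only [Function.comp]
    rw [hcard H, ← sub_div, one_div, div_eq_inv_mul]
    apply mul_le_mul_of_nonneg_left _ (by positivity)
    have := Set.ncard_le_ncard_sdiff_add_ncard {z ∈ rpO (θ₁ / 2) (θ₂ / 2) H | Int.gcd z.1 z.2 = 1} {((0 : ℤ), (1 : ℤ))}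
    rw [Set.ncard_singleton] at this
    rw [sub_le_iff_le_add]
    exact_mod_cast this
  · intro H
    dsimp only [Function.comp]
    rw [hcard H, one_div, div_eq_inv_mul _ (H : ℝ)]
    apply mul_le_mul_of_nonneg_left _ (by positivity)
    exact_mod_cast Set.ncard_le_ncard Set.sdiff_subset (hfin H)
end

section
/- Let (ℤ^odd)²_prim = {(m,n) ∈ ℤ² : m and n are both odd and gcd(m,n) = 1}. For every continuous function f : ℝ² → ℝ with compact support, lim_{ε→0⁺} Σ_{z∈(ℤ^odd)²_prim} ε² f(εz) = (2/π²) · ∫_{ℝ²} f(x) dx; that is, (ℤ^odd)²_prim has constant density 2/π². -/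
open Filter MeasureTheory

/-- `(ℤ^odd)²_prim`: pairs of odd coprime integers. -/
def OddPrim : Set (ℤ × ℤ) :=
  {p | Odd p.1 ∧ Odd p.2 ∧ Int.gcd p.1 p.2 = 1}

open scoped ArithmeticFunction.Moebius

/-- The Moebius function restricted to odd integers. -/
noncomputable def cOdd (d : ℕ) : ℝ := if Odd d then (μ d : ℝ) else 0

lemma abs_cOdd_le (d : ℕ) : |cOdd d| ≤ 1 := by
  unfold cOdd
  split_ifs
  · exact_mod_cast ArithmeticFunction.abs_moebius_le_one
  · simp

lemma tsum_cOdd : ∑' d : ℕ, cOdd d / (d : ℝ) ^ 2 = 8 / Real.pi ^ 2 := by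
  have h := DirichletCharacter.LSeries.mul_mu_eq_one (1 : DirichletCharacter ℂ 2) (s := 2)
    (by norm_num)
  have h2 : LSeries (fun n : ℕ => (1 : DirichletCharacter ℂ 2) n) 2 = (Real.pi : ℂ) ^ 2 / 8 := by
    rw [← DirichletCharacter.LFunction_eq_LSeries _ (by norm_num)]
    have := DirichletCharacter.LFunctionTrivChar_eq_mul_riemannZeta (N := 2) (s := 2) (by norm_num)
    rw [DirichletCharacter.LFunctionTrivChar] at this
    rw [this, riemannZeta_two, Nat.Prime.primeFactors Nat.prime_two, Finset.prod_singleton]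
    have : ((2 : ℕ) : ℂ) ^ (-2 : ℂ) = 1 / 4 := by
      rw [Complex.cpow_neg]
      norm_num
    rw [this]; ring
  have h3 : LSeries ((fun n : ℕ => (1 : DirichletCharacter ℂ 2) n) * (fun n : ℕ => (μ n : ℂ))) 2
      = ((∑' d : ℕ, cOdd d / (d : ℝ) ^ 2 : ℝ) : ℂ) := by
    rw [LSeries, Complex.ofReal_tsum]
    refine tsum_congr fun d => ?_
    rcases eq_or_ne d 0 with rfl | hd
    · simp
    rw [LSeries.term_of_ne_zero hd]
    have e : (1 : DirichletCharacter ℂ 2) (d : ZMod 2) = if Odd d then 1 else 0 := by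
      split_ifs with ho
      · rw [MulChar.one_apply]
        rw [ZMod.isUnit_iff_coprime]
        exact ho.coprime_two_right
      · apply MulChar.map_nonunit
        rw [ZMod.isUnit_iff_coprime]
        intro hc
        exact ho (Nat.coprime_two_right.mp hc)
    simp only [Pi.mul_apply, e, cOdd]
    split_ifs <;> simp
  rw [h2, h3] at h
  have hpi : (Real.pi : ℝ) ≠ 0 := Real.pi_ne_zero
  have h4 : Real.pi ^ 2 / 8 * (∑' d : ℕ, cOdd d / (d : ℝ) ^ 2) = 1 := by exact_mod_cast h
  field_simp at h4 ⊢
  linarith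

/-- The sum over all odd pairs. -/
noncomputable def sumOdd (f : ℝ × ℝ → ℝ) (ε : ℝ) : ℝ :=
  ∑' z : ℤ × ℤ, ε ^ 2 * f (ε * (2 * z.1 + 1), ε * (2 * z.2 + 1))

/-- floor of both coordinates -/
noncomputable def floor2 (x : ℝ × ℝ) : ℤ × ℤ := (⌊x.1⌋, ⌊x.2⌋)

lemma measurable_floor2 : Measurable floor2 :=
  (Int.measurable_floor.comp measurable_fst).prodMk (Int.measurable_floor.comp measurable_snd)

lemma map_floor2_singleton (z : ℤ × ℤ) :
    (Measure.map floor2 volume).real {z} = 1 := by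
  rw [map_measureReal_apply measurable_floor2 (MeasurableSet.singleton z)]
  have : floor2 ⁻¹' {z} = Set.Ico (z.1 : ℝ) (z.1 + 1) ×ˢ Set.Ico (z.2 : ℝ) (z.2 + 1) := by
    ext x
    simp [floor2, Prod.ext_iff, Int.floor_eq_iff]
  rw [this, Measure.volume_eq_prod, measureReal_prod_prod]
  simp

/-- rounding to the centre of the cell -/
noncomputable def rnd (ε : ℝ) (t : ℝ) : ℝ := ε * (2 * ⌊t / (2 * ε)⌋ + 1)

lemma measurable_rnd (ε : ℝ) : Measurable (rnd ε) := by
  unfold rnd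
  have : Measurable (fun t : ℝ => ((⌊t / (2 * ε)⌋ : ℤ) : ℝ)) :=
    (measurable_of_countable _).comp (Int.measurable_floor.comp (measurable_id.div_const _))
  fun_prop

lemma abs_rnd_sub_le {ε : ℝ} (hε : 0 < ε) (t : ℝ) : |rnd ε t - t| ≤ ε := by
  have h1 := Int.floor_le (t / (2 * ε))
  have h2 := Int.lt_floor_add_one (t / (2 * ε))
  rw [le_div_iff₀ (by positivity)] at h1
  rw [div_lt_iff₀ (by positivity)] at h2
  unfold rnd
  rw [abs_le]
  constructor <;> nlinarith

/-- rounding both coordinates -/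
noncomputable def rnd2 (ε : ℝ) (x : ℝ × ℝ) : ℝ × ℝ := (rnd ε x.1, rnd ε x.2)

lemma measurable_rnd2 (ε : ℝ) : Measurable (rnd2 ε) :=
  ((measurable_rnd ε).comp measurable_fst).prodMk ((measurable_rnd ε).comp measurable_snd)

lemma norm_rnd2_sub_le {ε : ℝ} (hε : 0 < ε) (x : ℝ × ℝ) : ‖rnd2 ε x - x‖ ≤ ε := by
  rw [Prod.norm_def]
  exact max_le (abs_rnd_sub_le hε _) (abs_rnd_sub_le hε _)

section
variable {f : ℝ × ℝ → ℝ} {C R : ℝ}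

lemma bound_rnd2 (hC : ∀ x, ‖f x‖ ≤ C) (hR : ∀ x, f x ≠ 0 → ‖x‖ ≤ R) {ε δ : ℝ} (hε : 0 < ε)
    (hδ : ε ≤ δ) (x : ℝ × ℝ) :
    ‖f (rnd2 ε x)‖ ≤ (Metric.closedBall (0 : ℝ × ℝ) (R + δ)).indicator (fun _ => C) x := by
  by_cases h : f (rnd2 ε x) = 0
  · rw [h, norm_zero]
    apply Set.indicator_nonneg
    intro _ _
    exact (norm_nonneg _).trans (hC 0)
  · rw [Set.indicator_of_mem]
    · exact hC _
    · rw [mem_closedBall_zero_iff]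
      have h1 := hR _ h
      have h2 := norm_rnd2_sub_le hε x
      have h3 := norm_sub_le (rnd2 ε x) (rnd2 ε x - x)
      rw [sub_sub_cancel] at h3
      linarith

lemma integrable_ball (C r : ℝ) :
    Integrable ((Metric.closedBall (0 : ℝ × ℝ) r).indicator (fun _ => C)) := by
  rw [integrable_indicator_iff Metric.isClosed_closedBall.measurableSet]
  exact integrableOn_const (isCompact_closedBall _ _).measure_lt_top.ne

lemma integrable_rnd2 (hf : Continuous f) (hC : ∀ x, ‖f x‖ ≤ C)
    (hR : ∀ x, f x ≠ 0 → ‖x‖ ≤ R) {ε : ℝ} (hε : 0 < ε) :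
    Integrable (fun x => f (rnd2 ε x)) :=
  (integrable_ball C (R + ε)).mono' (hf.measurable.comp (measurable_rnd2 ε)).aestronglyMeasurable
    (Eventually.of_forall (bound_rnd2 hC hR hε le_rfl))

lemma sumOdd_eq_integral (hf : Continuous f) (hC : ∀ x, ‖f x‖ ≤ C)
    (hR : ∀ x, f x ≠ 0 → ‖x‖ ≤ R) {ε : ℝ} (hε : 0 < ε) :
    sumOdd f ε = 1 / 4 * ∫ x, f (rnd2 ε x) := by
  set g : ℤ × ℤ → ℝ := fun z => f (ε * (2 * z.1 + 1), ε * (2 * z.2 + 1)) with hg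
  have hgm : Measurable g := measurable_of_countable _
  have h1 : ∀ x, f (rnd2 ε x) = g (floor2 ((2 * ε)⁻¹ • x)) := by
    intro x
    simp only [rnd2, rnd, hg, floor2, Prod.smul_fst, Prod.smul_snd, smul_eq_mul, div_eq_inv_mul]
  have hI : Integrable (fun x => g (floor2 x)) := by
    have := integrable_rnd2 hf hC hR hε
    simp_rw [h1] at this
    exact (integrable_comp_smul_iff volume (fun x => g (floor2 x))
      (inv_ne_zero (by positivity : (2 * ε) ≠ 0))).mp this
  have h2 : ∫ x, g (floor2 x) = ∑' z, g z := by
    rw [← integral_map measurable_floor2.aemeasurable hgm.aestronglyMeasurable,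
      integral_countable]
    · simp [map_floor2_singleton]
    · exact (integrable_map_measure hgm.aestronglyMeasurable measurable_floor2.aemeasurable).mpr hI
  simp_rw [h1]
  rw [Measure.integral_comp_smul volume (fun x => g (floor2 x)), h2, sumOdd, tsum_mul_left]
  simp only [Module.finrank_prod, Module.finrank_self, smul_eq_mul]
  rw [abs_of_pos (by positivity)]
  have h3 : ((((2 * ε)⁻¹) ^ (1 + 1))⁻¹ : ℝ) = 4 * ε ^ 2 := by
    rw [inv_pow, inv_inv]; ring
  rw [h3]
  ring

lemma tendsto_sumOdd (hf : Continuous f) (hC : ∀ x, ‖f x‖ ≤ C)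
    (hR : ∀ x, f x ≠ 0 → ‖x‖ ≤ R) :
    Tendsto (sumOdd f) (nhdsWithin 0 (Set.Ioi 0)) (nhds (1 / 4 * ∫ x, f x)) := by
  have h0 : Tendsto (fun ε : ℝ => 1 / 4 * ∫ x, f (rnd2 ε x)) (nhdsWithin 0 (Set.Ioi 0))
      (nhds (1 / 4 * ∫ x, f x)) := by
    refine Tendsto.const_mul _ ?_
    refine tendsto_integral_filter_of_dominated_convergence
      ((Metric.closedBall (0 : ℝ × ℝ) (R + 1)).indicator (fun _ => C)) ?_ ?_
      (integrable_ball _ _) ?_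
    · exact Eventually.of_forall fun ε =>
        (hf.measurable.comp (measurable_rnd2 ε)).aestronglyMeasurable
    · filter_upwards [Ioo_mem_nhdsGT (zero_lt_one : (0 : ℝ) < 1)] with ε hε
      exact Eventually.of_forall (bound_rnd2 hC hR hε.1 hε.2.le)
    · refine Eventually.of_forall fun x => (hf.tendsto x).comp ?_
      rw [tendsto_iff_norm_sub_tendsto_zero]
      refine squeeze_zero' (g := fun ε : ℝ => ε) (Eventually.of_forall fun _ => norm_nonneg _) ?_
        (tendsto_nhdsWithin_of_tendsto_nhds tendsto_id)
      filter_upwards [self_mem_nhdsWithin] with ε hε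
      exact norm_rnd2_sub_le hε x
  refine h0.congr' ?_
  filter_upwards [self_mem_nhdsWithin] with ε hε
  exact (sumOdd_eq_integral hf hC hR hε).symm

lemma one_le_abs_odd (m : ℤ) : (1 : ℝ) ≤ |2 * (m : ℝ) + 1| := by
  have : (1 : ℤ) ≤ |2 * m + 1| := by
    apply Int.one_le_abs
    omega
  exact_mod_cast this

lemma bounded_sumOdd (hf : Continuous f) (hC : ∀ x, ‖f x‖ ≤ C)
    (hR : ∀ x, f x ≠ 0 → ‖x‖ ≤ R) :
    ∃ B, ∀ ε, 0 ≤ ε → ‖sumOdd f ε‖ ≤ B := by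
  refine ⟨1 / 4 * ∫ x, (Metric.closedBall (0 : ℝ × ℝ) (R + R)).indicator (fun _ => C) x, ?_⟩
  have hnn : 0 ≤ 1 / 4 * ∫ x, (Metric.closedBall (0 : ℝ × ℝ) (R + R)).indicator (fun _ => C) x := by
    refine mul_nonneg (by norm_num) (integral_nonneg fun x => ?_)
    apply Set.indicator_nonneg
    intro _ _
    exact (norm_nonneg _).trans (hC 0)
  intro ε hε
  rcases hε.eq_or_lt with rfl | hε
  · simpa [sumOdd] using hnn
  by_cases h : ε ≤ R
  · rw [sumOdd_eq_integral hf hC hR hε, norm_mul]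
    rw [show ‖(1 / 4 : ℝ)‖ = 1 / 4 by norm_num]
    gcongr
    exact norm_integral_le_of_norm_le (integrable_ball _ _)
      (Eventually.of_forall (bound_rnd2 hC hR hε h))
  · have : sumOdd f ε = 0 := by
      rw [sumOdd, ← tsum_zero]
      refine tsum_congr fun z => ?_
      by_contra hne
      have h1 := hR _ (right_ne_zero_of_mul hne)
      have h2 := (norm_fst_le _).trans h1
      simp only [norm_mul, Real.norm_eq_abs, abs_of_pos hε] at h2
      have h3 := one_le_abs_odd z.1
      nlinarith
    rw [this, norm_zero]
    exact hnn

lemma sum_cOdd (m n : ℤ) (hm : Odd m) :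
    ∑ d ∈ (Int.gcd m n).divisors, cOdd d = if Int.gcd m n = 1 then 1 else 0 := by
  have h : ∑ d ∈ (Int.gcd m n).divisors, cOdd d = ∑ d ∈ (Int.gcd m n).divisors, (μ d : ℝ) := by
    refine Finset.sum_congr rfl fun d hd => ?_
    have h1 : d ∣ m.natAbs := (Nat.dvd_of_mem_divisors hd).trans (Nat.gcd_dvd_left _ _)
    have : Odd d := (Int.natAbs_odd.mpr hm).of_dvd_nat h1
    simp [cOdd, this]
  rw [h]
  have := congrArg (fun F : ArithmeticFunction ℤ => F (Int.gcd m n))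
    ArithmeticFunction.coe_zeta_mul_moebius
  simp only [ArithmeticFunction.coe_zeta_mul_apply, ArithmeticFunction.one_apply] at this
  exact_mod_cast this

/-- the integer box -/
noncomputable def zbox (N : ℤ) : Finset (ℤ × ℤ) := Finset.Icc (-N) N ×ˢ Finset.Icc (-N) N

lemma mem_zbox (hR : ∀ x, f x ≠ 0 → ‖x‖ ≤ R) {ε : ℝ} (hε : 0 < ε) (w : ℤ × ℤ)
    (h : f (ε * (w.1 : ℝ), ε * (w.2 : ℝ)) ≠ 0) : w ∈ zbox ⌈R / ε⌉ := by
  have h1 := hR _ h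
  have key : ∀ k : ℤ, ‖ε * (k : ℝ)‖ ≤ R → k ∈ Finset.Icc (-⌈R / ε⌉) ⌈R / ε⌉ := by
    intro k hk
    rw [norm_mul, Real.norm_eq_abs, Real.norm_eq_abs, abs_of_pos hε] at hk
    have h2 : |(k : ℝ)| ≤ (⌈R / ε⌉ : ℤ) := by
      refine le_trans ?_ (Int.le_ceil _)
      rw [le_div_iff₀ hε]; linarith
    rw [Finset.mem_Icc, ← abs_le]
    exact_mod_cast h2
  exact Finset.mem_product.mpr ⟨key _ ((norm_fst_le _).trans h1), key _ ((norm_snd_le _).trans h1)⟩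

open Classical in
lemma sumOdd_mul (hR : ∀ x, f x ≠ 0 → ‖x‖ ≤ R) {ε : ℝ} (hε : 0 < ε) {d : ℕ} (hd : Odd d) :
    sumOdd f (d * ε) / (d : ℝ) ^ 2 = ∑ w ∈ zbox ⌈R / ε⌉,
      if (Odd w.1 ∧ Odd w.2 ∧ (d : ℤ) ∣ w.1 ∧ (d : ℤ) ∣ w.2) then
        ε ^ 2 * f (ε * (w.1 : ℝ), ε * (w.2 : ℝ)) else 0 := by
  have hd0 : (d : ℝ) ≠ 0 := by exact_mod_cast hd.pos.ne'
  have hd0' : (d : ℤ) ≠ 0 := by exact_mod_cast hd.pos.ne'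
  have hdz : Odd (d : ℤ) := by exact_mod_cast hd
  set G : ℤ × ℤ → ℝ := fun w => if (Odd w.1 ∧ Odd w.2 ∧ (d : ℤ) ∣ w.1 ∧ (d : ℤ) ∣ w.2) then
        ε ^ 2 * f (ε * (w.1 : ℝ), ε * (w.2 : ℝ)) else 0 with hG
  let φ : ℤ × ℤ → ℤ × ℤ := fun z => (d * (2 * z.1 + 1), d * (2 * z.2 + 1))
  have hφ : Function.Injective φ := by
    rintro ⟨a, b⟩ ⟨a', b'⟩ h
    simp only [φ, Prod.mk.injEq, mul_right_inj' hd0'] at h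
    ext <;> simp <;> omega
  have hs : Function.support G ⊆ Set.range φ := by
    intro w hw
    have hw' : Odd w.1 ∧ Odd w.2 ∧ (d : ℤ) ∣ w.1 ∧ (d : ℤ) ∣ w.2 := by
      by_contra hc
      exact hw (by simp only [hG, if_neg hc])
    obtain ⟨o1, o2, ⟨a, ha⟩, ⟨b, hb⟩⟩ := hw'
    rw [ha] at o1
    rw [hb] at o2
    obtain ⟨a', ha'⟩ := (Int.odd_mul.mp o1).2
    obtain ⟨b', hb'⟩ := (Int.odd_mul.mp o2).2
    exact ⟨(a', b'), by ext <;> simp [φ, ha, hb, ha', hb']⟩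
  have h1 : ∑ w ∈ zbox ⌈R / ε⌉, G w = ∑' w, G w := by
    rw [tsum_eq_sum]
    intro w hw
    by_contra hne
    apply hw
    apply mem_zbox hR hε w
    intro h0
    apply hne
    simp [hG, h0]
  rw [h1, ← hφ.tsum_eq hs, sumOdd, ← tsum_div_const]
  refine tsum_congr fun z => ?_
  have hc : Odd (φ z).1 ∧ Odd (φ z).2 ∧ (d : ℤ) ∣ (φ z).1 ∧ (d : ℤ) ∣ (φ z).2 :=
    ⟨hdz.mul ⟨_, rfl⟩, hdz.mul ⟨_, rfl⟩, Dvd.intro _ rfl, Dvd.intro _ rfl⟩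
  simp only [hG, if_pos hc]
  simp only [φ]
  push_cast
  rw [show (d : ℝ) * ε * (2 * z.1 + 1) = ε * (d * (2 * z.1 + 1)) by ring,
    show (d : ℝ) * ε * (2 * z.2 + 1) = ε * (d * (2 * z.2 + 1)) by ring]
  field_simp

open Classical in
lemma finsum_eq (hR : ∀ x, f x ≠ 0 → ‖x‖ ≤ R) {ε : ℝ} (hε : 0 < ε) :
    ∑ᶠ z ∈ OddPrim, ε ^ 2 * f (ε * (z.1 : ℝ), ε * (z.2 : ℝ)) =
      ∑' d : ℕ, cOdd d / (d : ℝ) ^ 2 * sumOdd f (d * ε) := by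
  set g : ℤ × ℤ → ℝ := fun w => ε ^ 2 * f (ε * (w.1 : ℝ), ε * (w.2 : ℝ)) with hg
  have hL : ∑ᶠ z ∈ OddPrim, g z = ∑ w ∈ zbox ⌈R / ε⌉, OddPrim.indicator g w := by
    rw [finsum_mem_def]
    refine finsum_eq_sum_of_support_subset _ ?_
    intro w hw
    apply mem_zbox hR hε w
    intro h0
    apply hw
    simp only [Set.indicator_apply]
    simp [hg, h0]
  have hR' : ∀ d : ℕ, cOdd d / (d : ℝ) ^ 2 * sumOdd f (d * ε) = ∑ w ∈ zbox ⌈R / ε⌉,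
      cOdd d * (if (Odd w.1 ∧ Odd w.2 ∧ (d : ℤ) ∣ w.1 ∧ (d : ℤ) ∣ w.2) then g w else 0) := by
    intro d
    by_cases hd : Odd d
    · rw [← Finset.mul_sum, ← sumOdd_mul hR hε hd]; ring
    · simp [cOdd, hd]
  have hz : ∀ (w : ℤ × ℤ), ∀ d ∉ (Int.gcd w.1 w.2).divisors,
      cOdd d * (if (Odd w.1 ∧ Odd w.2 ∧ (d : ℤ) ∣ w.1 ∧ (d : ℤ) ∣ w.2) then g w else 0) = 0 := by
    intro w d hd
    rw [if_neg, mul_zero]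
    rintro ⟨o1, -, d1, d2⟩
    apply hd
    rw [Nat.mem_divisors]
    refine ⟨Int.dvd_gcd d1 d2, ?_⟩
    intro h0
    rw [Int.gcd_eq_zero_iff] at h0
    rw [h0.1] at o1
    exact absurd o1 (by decide)
  change ∑ᶠ z ∈ OddPrim, g z = _
  rw [hL, tsum_congr hR', Summable.tsum_finsetSum]
  · refine Finset.sum_congr rfl fun w _ => ?_
    rw [tsum_eq_sum (hz w)]
    by_cases ho : Odd w.1 ∧ Odd w.2
    · have : ∀ d ∈ (Int.gcd w.1 w.2).divisors,
        cOdd d * (if (Odd w.1 ∧ Odd w.2 ∧ (d : ℤ) ∣ w.1 ∧ (d : ℤ) ∣ w.2) then g w else 0)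
          = cOdd d * g w := by
        intro d hd
        have hd' := Nat.dvd_of_mem_divisors hd
        rw [if_pos]
        exact ⟨ho.1, ho.2, (Int.natCast_dvd_natCast.mpr hd').trans (Int.gcd_dvd_left ..),
          (Int.natCast_dvd_natCast.mpr hd').trans (Int.gcd_dvd_right ..)⟩
      rw [Finset.sum_congr rfl this, ← Finset.sum_mul, sum_cOdd _ _ ho.1, Set.indicator_apply]
      simp [OddPrim, ho.1, ho.2]
    · rw [Set.indicator_of_notMem (fun h => ho ⟨h.1, h.2.1⟩)]
      symm
      apply Finset.sum_eq_zero
      intro d _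
      rw [if_neg (fun h => ho ⟨h.1, h.2.1⟩), mul_zero]
  · intro w _
    exact summable_of_ne_finset_zero (s := (Int.gcd w.1 w.2).divisors) (hz w)

end

/-- **`(ℤ^odd)²_prim` has constant density `2/π²`** : for every continuous compactly
supported `f : ℝ² → ℝ`,
`lim_{ε→0⁺} Σ_{z ∈ (ℤ^odd)²_prim} ε² f(εz) = (2/π²) ∫_{ℝ²} f(x) dx`. -/
theorem oddPrim_constant_density (f : ℝ × ℝ → ℝ)
    (hf : Continuous f) (hf' : HasCompactSupport f) :
    Tendsto
      (fun ε : ℝ => ∑ᶠ z ∈ OddPrim, ε ^ 2 * f (ε * (z.1 : ℝ), ε * (z.2 : ℝ)))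
      (nhdsWithin 0 (Set.Ioi 0))
      (nhds (2 / Real.pi ^ 2 * ∫ x : ℝ × ℝ, f x)) := by
  obtain ⟨C, hC⟩ := hf.bounded_above_of_compact_support hf'
  obtain ⟨R, hR0⟩ := hf'.isCompact.isBounded.exists_norm_le
  have hR : ∀ x, f x ≠ 0 → ‖x‖ ≤ R := fun x hx => hR0 x (subset_tsupport f hx)
  obtain ⟨B, hB⟩ := bounded_sumOdd hf hC hR
  have hlim : 2 / Real.pi ^ 2 * ∫ x : ℝ × ℝ, f x =
      ∑' d : ℕ, cOdd d / (d : ℝ) ^ 2 * (1 / 4 * ∫ x : ℝ × ℝ, f x) := by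
    rw [tsum_mul_right, tsum_cOdd]; ring
  rw [hlim]
  have hT : Tendsto (fun ε : ℝ => ∑' d : ℕ, cOdd d / (d : ℝ) ^ 2 * sumOdd f (d * ε))
      (nhdsWithin 0 (Set.Ioi 0))
      (nhds (∑' d : ℕ, cOdd d / (d : ℝ) ^ 2 * (1 / 4 * ∫ x : ℝ × ℝ, f x))) := by
    refine tendsto_tsum_of_dominated_convergence (bound := fun d : ℕ => 1 / (d : ℝ) ^ 2 * B)
      ((Real.summable_one_div_nat_pow.mpr one_lt_two).mul_right B) ?_ ?_
    · intro d
      rcases Nat.eq_zero_or_pos d with rfl | hd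
      · simp
      refine Tendsto.const_mul _ ((tendsto_sumOdd hf hC hR).comp ?_)
      have hd' : (0 : ℝ) < d := by exact_mod_cast hd
      refine tendsto_nhdsWithin_iff.mpr ⟨?_, ?_⟩
      · refine tendsto_nhdsWithin_of_tendsto_nhds ?_
        have : Continuous (fun ε : ℝ => (d : ℝ) * ε) := by fun_prop
        simpa using this.tendsto 0
      · filter_upwards [self_mem_nhdsWithin] with ε hε
        exact mul_pos hd' hε
    · filter_upwards [self_mem_nhdsWithin] with ε hε
      intro d
      have hε' : 0 < ε := hε
      rw [norm_mul, norm_div, Real.norm_eq_abs, Real.norm_eq_abs, abs_of_nonneg (sq_nonneg (d : ℝ))]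
      have h1 := abs_cOdd_le d
      have h2 := hB (d * ε) (by positivity)
      gcongr
  refine hT.congr' ?_
  filter_upwards [self_mem_nhdsWithin] with ε hε
  exact (finsum_eq hR hε).symm
end
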